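/- arXiv:2407.13746 — 10 statements merged into one kernel-verified Lean document; each statement's English description precedes it below -/
import Mathlib

section
/- Let V ⊆ ℝ be a nonempty set (the achievable score values), Φ : ℝ → ℝ a nonnegative function, and Γ : ℝ → ℝ a function that is concave on [0, ∞). Assume the pointwise binary consistency bound: for every α ∈ [0,1] and every u ∈ V, (α·1{u<0} + (1−α)·1{u≥0}) − inf_{u'∈V} (α·1{u'<0} + (1−α)·1{u'≥0}) ≤ Γ( (α·Φ(u) + (1−α)·Φ(−u)) − inf_{u'∈V} (α·Φ(u') + (1−α)·Φ(−u')) ). Then for every conditional label distribution p on Y = {−1,+1}^l and every v ∈ V^l, the conditional Hamming regret satisfies E_ham(v) − inf_{w∈V^l} E_ham(w) ≤ l·Γ( (E_br(v) − inf_{w∈V^l} E_br(w)) / l ), where E_ham(v) = ∑_{y∈Y} p(y) ∑_{i=1}^{l} 1{y_i ≠ sgn(v_i)} with sgn(t) = +1 if t ≥ 0 and −1 otherwise, and E_br(v) = ∑_{y∈Y} p(y) ∑_{i=1}^{l} Φ(y_i·v_i). -/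
noncomputable section
open Real

/-- Sign: `+1` if `t ≥ 0`, `−1` otherwise. -/
def sgn (t : ℝ) : ℝ := if 0 ≤ t then 1 else -1

/-- Real value (`±1`) of a Boolean label coordinate. -/
def signVal (b : Bool) : ℝ := if b then 1 else -1

/-- Conditional binary zero-one error of score `u` when the label `+1` has probability `α`. -/
def berr (α u : ℝ) : ℝ :=
  α * (if u < 0 then (1 : ℝ) else 0) + (1 - α) * (if 0 ≤ u then (1 : ℝ) else 0)

/-- Conditional binary surrogate error of score `u` for the margin loss `Φ`. -/
def bsur (Φ : ℝ → ℝ) (α u : ℝ) : ℝ := α * Φ u + (1 - α) * Φ (-u)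

/-- Conditional Hamming error of the score vector `v`. -/
def Eham {l : ℕ} (p : (Fin l → Bool) → ℝ) (v : Fin l → ℝ) : ℝ :=
  ∑ y, p y * ∑ i, (if signVal (y i) = sgn (v i) then (0 : ℝ) else 1)

/-- Conditional binary-relevance surrogate error of the score vector `v`. -/
def Ebr {l : ℕ} (Φ : ℝ → ℝ) (p : (Fin l → Bool) → ℝ) (v : Fin l → ℝ) : ℝ :=
  ∑ y, p y * ∑ i, Φ (signVal (y i) * v i)

/-!
Averaging over the labels one coordinate at a time turns both conditional errors into sums of
binary conditional errors, the `i`-th one at the marginal probability that `y i = +1`. The scores of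
different coordinates are chosen independently, so the infimum of such a sum is the sum of the
infima and the regret is additive over the coordinates. The binary bound thus holds coordinatewise,
and Jensen's inequality for the concave `Γ`, with uniform weights `1 / l`, combines the `l` bounds.
-/

section PointwiseSums

open scoped Pointwise

theorem image_sum_univ_pi {ι M : Type*} [Fintype ι] [AddCommMonoid M] {α : ι → Type*}
    (f : ∀ i, α i → M) (s : ∀ i, Set (α i)) :
    (fun w : ∀ i, α i => ∑ i, f i (w i)) '' Set.univ.pi s = ∑ i, f i '' s i := by
  rw [← Set.image_fintype_sum_pi, ← Set.piMap_image_univ_pi, Set.image_image]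
  rfl

theorem isGLB_sum {ι M : Type*} [AddCommGroup M] [PartialOrder M] [IsOrderedAddMonoid M]
    {t : Finset ι} {S : ι → Set M} {a : ι → M} (h : ∀ i ∈ t, IsGLB (S i) (a i)) :
    IsGLB (∑ i ∈ t, S i) (∑ i ∈ t, a i) := by
  classical
  induction t using Finset.induction_on with
  | empty => simp only [Finset.sum_empty, ← Set.singleton_zero, isGLB_singleton]
  | insert i t hi ih =>
    rw [Finset.sum_insert hi, Finset.sum_insert hi]
    exact (h i (Finset.mem_insert_self i t)).add
      (ih fun j hj => h j (Finset.mem_insert_of_mem hj))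

end PointwiseSums

theorem sum_map_le_card_mul_map_mean_of_concaveOn {𝕜 ι : Type*} [Field 𝕜] [LinearOrder 𝕜]
    [IsStrictOrderedRing 𝕜] {D : Set 𝕜} {Γ : 𝕜 → 𝕜} (hΓ : ConcaveOn 𝕜 D Γ) {t : Finset ι}
    (ht : t.Nonempty) {x : ι → 𝕜} (hx : ∀ i ∈ t, x i ∈ D) :
    ∑ i ∈ t, Γ (x i) ≤ t.card * Γ ((∑ i ∈ t, x i) / t.card) := by
  have hcard : (0 : 𝕜) < t.card := Nat.cast_pos.mpr ht.card_pos
  have hweights : ∑ _i ∈ t, (t.card : 𝕜)⁻¹ = 1 := by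
    rw [Finset.sum_const, nsmul_eq_mul, mul_inv_cancel₀ hcard.ne']
  have jensen := hΓ.le_map_sum (fun _ _ => (inv_pos.mpr hcard).le) hweights hx
  simp only [smul_eq_mul, ← Finset.mul_sum] at jensen
  rwa [inv_mul_le_iff₀ hcard, inv_mul_eq_div] at jensen

section Regret

open scoped Pointwise

/-- The regret of the choice `u` under the objective `f`: its excess over the infimum of `f` on the
set `s` of admissible choices. It is meaningful only if `f` is bounded below on `s`, since the real
`sInf` of an unbounded set is `0`. -/
def regret {α : Type*} (f : α → ℝ) (s : Set α) (u : α) : ℝ := f u - sInf (f '' s)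

theorem regret_nonneg {α : Type*} {f : α → ℝ} {s : Set α} {u : α} (hf : BddBelow (f '' s))
    (hu : u ∈ s) : 0 ≤ regret f s u :=
  sub_nonneg.mpr (csInf_le hf (Set.mem_image_of_mem f hu))

variable {ι : Type*} [Fintype ι] {α : ι → Type*} {f g : ∀ i, α i → ℝ} {s : ∀ i, Set (α i)}
  {v : ∀ i, α i}

theorem csInf_image_sum_univ_pi (hs : ∀ i, (s i).Nonempty) (hf : ∀ i, BddBelow (f i '' s i)) :
    sInf ((fun w : ∀ i, α i => ∑ i, f i (w i)) '' Set.univ.pi s) = ∑ i, sInf (f i '' s i) := by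
  have hglb : IsGLB (∑ i, f i '' s i) (∑ i, sInf (f i '' s i)) :=
    isGLB_sum fun i _ => isGLB_csInf ((hs i).image (f i)) (hf i)
  rw [← image_sum_univ_pi] at hglb
  exact hglb.csInf_eq ((Set.univ_pi_nonempty_iff.mpr hs).image _)

theorem regret_sum (hf : ∀ i, BddBelow (f i '' s i)) (hs : ∀ i, (s i).Nonempty) :
    regret (fun w : ∀ i, α i => ∑ i, f i (w i)) (Set.univ.pi s) v
      = ∑ i, regret (f i) (s i) (v i) := by
  simp only [regret, csInf_image_sum_univ_pi hs hf, Finset.sum_sub_distrib]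

theorem regret_sum_le_card_mul [Nonempty ι] {Γ : ℝ → ℝ} (hΓ : ConcaveOn ℝ (Set.Ici 0) Γ)
    (hf : ∀ i, BddBelow (f i '' s i)) (hg : ∀ i, BddBelow (g i '' s i)) (hv : ∀ i, v i ∈ s i)
    (hfg : ∀ i, regret (f i) (s i) (v i) ≤ Γ (regret (g i) (s i) (v i))) :
    regret (fun w : ∀ i, α i => ∑ i, f i (w i)) (Set.univ.pi s) v
      ≤ Fintype.card ι
        * Γ (regret (fun w : ∀ i, α i => ∑ i, g i (w i)) (Set.univ.pi s) v / Fintype.card ι) := by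
  have hs : ∀ i, (s i).Nonempty := fun i => ⟨v i, hv i⟩
  rw [regret_sum hf hs, regret_sum hg hs]
  calc ∑ i, regret (f i) (s i) (v i)
    _ ≤ ∑ i, Γ (regret (g i) (s i) (v i)) := Finset.sum_le_sum fun i _ => hfg i
    _ ≤ Fintype.card ι * Γ ((∑ i, regret (g i) (s i) (v i)) / Fintype.card ι) :=
      sum_map_le_card_mul_map_mean_of_concaveOn hΓ Finset.univ_nonempty
        fun i _ => regret_nonneg (hg i) (hv i)

end Regret

section PosMarginal

variable {ι : Type*} [Fintype ι] [DecidableEq ι] {p : (ι → Bool) → ℝ}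

/-- The marginal probability that coordinate `i` of a label vector drawn from `p` is `+1`, which is
encoded as `true`. -/
def posMarginal (p : (ι → Bool) → ℝ) (i : ι) : ℝ := ∑ y with y i, p y

theorem posMarginal_mem_Icc (hp0 : ∀ y, 0 ≤ p y) (hp1 : ∑ y, p y = 1) (i : ι) :
    posMarginal p i ∈ Set.Icc (0 : ℝ) 1 :=
  ⟨Finset.sum_nonneg fun y _ => hp0 y, hp1 ▸ Finset.sum_le_univ_sum_of_nonneg hp0⟩

theorem sum_mul_apply_eq_posMarginal (hp1 : ∑ y, p y = 1) (i : ι) (φ : Bool → ℝ) :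
    ∑ y, p y * φ (y i) = posMarginal p i * φ true + (1 - posMarginal p i) * φ false := by
  have hneg : 1 - posMarginal p i = ∑ y with ¬ y i, p y := by
    rw [← hp1, ← Finset.sum_filter_add_sum_filter_not Finset.univ (fun y => y i), posMarginal,
      add_sub_cancel_left]
  rw [hneg, posMarginal, Finset.sum_mul, Finset.sum_mul,
    ← Finset.sum_filter_add_sum_filter_not Finset.univ (fun y => y i)]
  congr 1
  · exact Finset.sum_congr rfl fun y hy => by rw [(Finset.mem_filter.mp hy).2]
  · exact Finset.sum_congr rfl fun y hy => by
      rw [Bool.eq_false_of_not_eq_true (Finset.mem_filter.mp hy).2]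

theorem sum_mul_sum_apply_eq_posMarginal (hp1 : ∑ y, p y = 1) (φ : ι → Bool → ℝ) :
    ∑ y, p y * ∑ i, φ i (y i)
      = ∑ i, (posMarginal p i * φ i true + (1 - posMarginal p i) * φ i false) := by
  simp only [Finset.mul_sum]
  rw [Finset.sum_comm]
  exact Finset.sum_congr rfl fun i _ => sum_mul_apply_eq_posMarginal hp1 i (φ i)

end PosMarginal

theorem signVal_true_eq_sgn_iff {t : ℝ} : signVal true = sgn t ↔ 0 ≤ t := by
  by_cases ht : 0 ≤ t <;> norm_num [signVal, sgn, ht]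

theorem signVal_false_eq_sgn_iff {t : ℝ} : signVal false = sgn t ↔ t < 0 := by
  by_cases ht : 0 ≤ t <;> norm_num [signVal, sgn, ht, ← not_le]

theorem Eham_eq_sum_berr {l : ℕ} {p : (Fin l → Bool) → ℝ} (hp1 : ∑ y, p y = 1) :
    Eham p = fun w => ∑ i, berr (posMarginal p i) (w i) := by
  funext w
  rw [Eham, sum_mul_sum_apply_eq_posMarginal hp1
    fun i b => if signVal b = sgn (w i) then (0 : ℝ) else 1]
  simp only [berr, signVal_true_eq_sgn_iff, signVal_false_eq_sgn_iff, ← not_le, ite_not]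

theorem Ebr_eq_sum_bsur {l : ℕ} (Φ : ℝ → ℝ) {p : (Fin l → Bool) → ℝ} (hp1 : ∑ y, p y = 1) :
    Ebr Φ p = fun w => ∑ i, bsur Φ (posMarginal p i) (w i) := by
  funext w
  rw [Ebr, sum_mul_sum_apply_eq_posMarginal hp1 fun i b => Φ (signVal b * w i)]
  simp [bsur, signVal]

theorem bddBelow_image_berr (α : ℝ) (s : Set ℝ) : BddBelow (berr α '' s) := by
  refine ⟨min α (1 - α), Set.forall_mem_image.mpr fun u _ => ?_⟩
  rcases lt_or_ge u 0 with hu | hu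
  · simp [berr, hu, hu.not_ge]
  · simp [berr, hu, hu.not_gt]

theorem bddBelow_image_bsur {Φ : ℝ → ℝ} {α : ℝ} {s : Set ℝ} (hα : α ∈ Set.Icc (0 : ℝ) 1)
    (hpos : BddBelow (Φ '' s)) (hneg : BddBelow ((fun u => Φ (-u)) '' s)) :
    BddBelow (bsur Φ α '' s) := by
  obtain ⟨a, ha⟩ := hpos
  obtain ⟨b, hb⟩ := hneg
  refine ⟨α * a + (1 - α) * b, Set.forall_mem_image.mpr fun u hu => ?_⟩
  exact add_le_add
    (mul_le_mul_of_nonneg_left (ha (Set.mem_image_of_mem _ hu)) hα.1)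
    (mul_le_mul_of_nonneg_left (hb (Set.mem_image_of_mem _ hu)) (sub_nonneg.mpr hα.2))

theorem binary_relevance_Hconsistency_bound_general {l : ℕ} (hl : 1 ≤ l) {V : Fin l → Set ℝ}
    {Φ : ℝ → ℝ} (hpos : ∀ i, BddBelow (Φ '' V i)) (hneg : ∀ i, BddBelow ((fun u => Φ (-u)) '' V i))
    {Γ : ℝ → ℝ} (hΓ : ConcaveOn ℝ (Set.Ici 0) Γ)
    (hbin : ∀ i, ∀ α ∈ Set.Icc (0 : ℝ) 1, ∀ u ∈ V i,
      regret (berr α) (V i) u ≤ Γ (regret (bsur Φ α) (V i) u))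
    {p : (Fin l → Bool) → ℝ} (hp0 : ∀ y, 0 ≤ p y) (hp1 : ∑ y, p y = 1)
    {v : Fin l → ℝ} (hv : ∀ i, v i ∈ V i) :
    regret (Eham p) (Set.univ.pi V) v ≤ l * Γ (regret (Ebr Φ p) (Set.univ.pi V) v / l) := by
  have : Nonempty (Fin l) := ⟨⟨0, hl⟩⟩
  have hα := posMarginal_mem_Icc hp0 hp1
  rw [Eham_eq_sum_berr hp1, Ebr_eq_sum_bsur Φ hp1]
  simpa only [Fintype.card_fin] using
    regret_sum_le_card_mul hΓ (fun i => bddBelow_image_berr (posMarginal p i) (V i))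
      (fun i => bddBelow_image_bsur (hα i) (hpos i) (hneg i)) hv
      fun i => hbin i _ (hα i) _ (hv i)

theorem binary_relevance_Hconsistency_bound
    (V : Set ℝ) (hV : V.Nonempty)
    (Φ : ℝ → ℝ) (hΦ : ∀ u, 0 ≤ Φ u)
    (Γ : ℝ → ℝ) (hΓ : ConcaveOn ℝ (Set.Ici 0) Γ)
    (hbin : ∀ α ∈ Set.Icc (0 : ℝ) 1, ∀ u ∈ V,
      berr α u - sInf (berr α '' V) ≤ Γ (bsur Φ α u - sInf (bsur Φ α '' V)))
    (l : ℕ) (hl : 1 ≤ l)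
    (p : (Fin l → Bool) → ℝ) (hp0 : ∀ y, 0 ≤ p y) (hp1 : ∑ y, p y = 1)
    (v : Fin l → ℝ) (hv : ∀ i, v i ∈ V) :
    Eham p v - sInf (Eham p '' {w : Fin l → ℝ | ∀ i, w i ∈ V})
      ≤ l * Γ ((Ebr Φ p v - sInf (Ebr Φ p '' {w : Fin l → ℝ | ∀ i, w i ∈ V})) / l) := by
  have hbdd {f : ℝ → ℝ} (hf : ∀ u, 0 ≤ f u) : BddBelow (f '' V) :=
    ⟨0, Set.forall_mem_image.mpr fun u _ => hf u⟩
  simpa only [regret, Set.pi, Set.mem_univ, true_implies] using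
    binary_relevance_Hconsistency_bound_general hl (fun _ => hbdd hΦ)
      (fun _ => hbdd fun u => hΦ (-u)) hΓ (fun _ => hbin) hp0 hp1 hv
end
end

section
/- For every α ∈ [0,1] and every u ∈ ℝ, the conditional binary zero-one regret of the prediction sgn(u) under the logistic loss satisfies (α·1{u<0} + (1−α)·1{u≥0}) − min(α, 1−α) ≤ √2 · √( α·log(1+e^{−u}) + (1−α)·log(1+e^{u}) − H(α) ), where H(α) = −α·log α − (1−α)·log(1−α) (with the convention 0·log 0 = 0), and H(α) = inf_{u'∈ℝ} ( α·log(1+e^{−u'}) + (1−α)·log(1+e^{u'}) ). -/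
noncomputable section
open Real

/-! With `q = sigmoid u`, the conditional logistic risk of the score `u` is the cross entropy of
Bernoulli(`α`) relative to Bernoulli(`q`), so Gibbs' inequality identifies its infimum with the
binary entropy. Evaluating Gibbs' inequality at the score `4α - 2`, which minimises the quadratic
upper bound coming from `cosh x ≤ exp (x² / 2)`, gives `H(α) ≤ log 2 - (2α - 1)² / 2`. A score
whose sign disagrees with `2α - 1` has logistic risk at least `log 2`, the risk of the score `0`,
hence logistic regret at least `(2α - 1)² / 2`, while its zero-one regret is at most `|2α - 1|`. -/

/-- The cross entropy, in nats, of the Bernoulli distribution with parameter `p` relative to the one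
with parameter `q`. Since `log 0 = 0` in Mathlib, it is meaningful only where `q = 0` forces `p = 0`
and `q = 1` forces `p = 1`. -/
def binCrossEntropy (p q : ℝ) : ℝ := p * log q⁻¹ + (1 - p) * log (1 - q)⁻¹

/-- The conditional risk of the score `u` under the logistic loss `v ↦ log (1 + exp (-v))`, when the
label `+1` has conditional probability `α`. -/
def logisticRisk (α u : ℝ) : ℝ := α * log (1 + exp (-u)) + (1 - α) * log (1 + exp u)

/-- The conditional zero-one error of the score `u`, when the label `+1` has conditional probability
`α`; the score `0` predicts `+1`. -/
def zeroOneRisk (α u : ℝ) : ℝ :=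
  α * (if u < 0 then (1 : ℝ) else 0) + (1 - α) * (if 0 ≤ u then (1 : ℝ) else 0)

section

variable {p q α u : ℝ}

lemma binCrossEntropy_self (p : ℝ) : binCrossEntropy p p = binEntropy p := rfl

lemma mul_log_inv_le_mul_log_inv_add_sub (hp : 0 ≤ p) (hq : 0 < q) :
    p * log p⁻¹ ≤ p * log q⁻¹ + (q - p) := by
  rcases hp.eq_or_lt with rfl | hp
  · simpa using hq.le
  · have hlog : log (q / p) ≤ q / p - 1 := log_le_sub_one_of_pos (div_pos hq hp)
    calc p * log p⁻¹ = p * log q⁻¹ + p * log (q / p) := by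
          rw [log_div hq.ne' hp.ne', log_inv, log_inv]; ring
      _ ≤ p * log q⁻¹ + p * (q / p - 1) := by gcongr
      _ = p * log q⁻¹ + (q - p) := by field_simp

lemma binEntropy_le_binCrossEntropy (hp : p ∈ Set.Icc 0 1) (hq : q ∈ Set.Ioo 0 1) :
    binEntropy p ≤ binCrossEntropy p q := by
  have h₁ := mul_log_inv_le_mul_log_inv_add_sub hp.1 hq.1
  have h₀ := mul_log_inv_le_mul_log_inv_add_sub (sub_nonneg.2 hp.2) (sub_pos.2 hq.2)
  unfold binEntropy binCrossEntropy
  linarith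

lemma continuousAt_const_mul_log_inv (p : ℝ) : ContinuousAt (fun x ↦ p * log x⁻¹) p := by
  rcases eq_or_ne p 0 with rfl | hp
  · simpa only [zero_mul] using continuousAt_const
  · simp only [log_inv]
    fun_prop (disch := assumption)

lemma continuousAt_binCrossEntropy_self (p : ℝ) : ContinuousAt (binCrossEntropy p) p :=
  (continuousAt_const_mul_log_inv p).add <|
    (continuousAt_const_mul_log_inv (1 - p)).comp (f := fun q ↦ 1 - q) (by fun_prop)

lemma isGLB_binCrossEntropy_image_Ioo (hp : p ∈ Set.Icc 0 1) :
    IsGLB (binCrossEntropy p '' Set.Ioo 0 1) (binEntropy p) := by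
  refine isGLB_of_mem_closure
    (Set.forall_mem_image.2 fun q hq ↦ binEntropy_le_binCrossEntropy hp hq) ?_
  rw [← binCrossEntropy_self]
  refine (continuousAt_binCrossEntropy_self p).continuousWithinAt.mem_closure_image ?_
  rwa [closure_Ioo zero_ne_one]

lemma logisticRisk_eq_binCrossEntropy_sigmoid (α u : ℝ) :
    logisticRisk α u = binCrossEntropy α (sigmoid u) := by
  rw [logisticRisk, binCrossEntropy, ← sigmoid_neg, sigmoid_def, sigmoid_def, inv_inv, inv_inv,
    neg_neg]

lemma isGLB_range_logisticRisk (hα : α ∈ Set.Icc 0 1) :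
    IsGLB (Set.range (logisticRisk α)) (binEntropy α) := by
  have hrange : Set.range (logisticRisk α) = binCrossEntropy α '' Set.Ioo 0 1 := by
    rw [← range_sigmoid, ← Set.range_comp]
    exact congrArg Set.range (funext (logisticRisk_eq_binCrossEntropy_sigmoid α))
  exact hrange ▸ isGLB_binCrossEntropy_image_Ioo hα

lemma log_one_add_exp_eq (u : ℝ) : log (1 + exp u) = log 2 + u / 2 + log (cosh (u / 2)) := by
  have hfactor : 1 + exp u = 2 * exp (u / 2) * cosh (u / 2) := by
    have hsq : exp (u / 2) * exp (u / 2) = exp u := by rw [← exp_add, add_halves]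
    have hinv : exp (u / 2) * exp (-(u / 2)) = 1 := by rw [← exp_add, add_neg_cancel, exp_zero]
    rw [cosh_eq]
    linear_combination -hsq - hinv
  rw [hfactor, log_mul (by positivity) (cosh_pos _).ne', log_mul two_ne_zero (exp_ne_zero _),
    log_exp]

lemma logisticRisk_eq_log_two_sub_add_log_cosh (α u : ℝ) :
    logisticRisk α u = log 2 - (2 * α - 1) * u / 2 + log (cosh (u / 2)) := by
  rw [logisticRisk, log_one_add_exp_eq u, log_one_add_exp_eq (-u), neg_div, cosh_neg]
  ring

lemma log_cosh_le_half_sq (x : ℝ) : log (cosh x) ≤ x ^ 2 / 2 :=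
  (log_le_iff_le_exp (cosh_pos x)).2 (cosh_le_exp_half_sq x)

lemma binEntropy_le_log_two_sub_half_sq (hp : p ∈ Set.Icc 0 1) :
    binEntropy p ≤ log 2 - (2 * p - 1) ^ 2 / 2 := by
  set t := 2 * p - 1 with ht
  calc binEntropy p ≤ logisticRisk p (2 * t) := (isGLB_range_logisticRisk hp).1 ⟨2 * t, rfl⟩
    _ = log 2 - t ^ 2 + log (cosh t) := by
      rw [logisticRisk_eq_log_two_sub_add_log_cosh, ← ht, mul_div_cancel_left₀ t two_ne_zero]
      ring
    _ ≤ log 2 - t ^ 2 + t ^ 2 / 2 := by gcongr; exact log_cosh_le_half_sq t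
    _ = log 2 - t ^ 2 / 2 := by ring

lemma log_two_le_logisticRisk (h : (2 * α - 1) * u ≤ 0) : log 2 ≤ logisticRisk α u := by
  have hcosh : 0 ≤ log (cosh (u / 2)) := log_nonneg (one_le_cosh _)
  rw [logisticRisk_eq_log_two_sub_add_log_cosh]
  linarith

lemma zeroOneRisk_sub_min_le_abs (α u : ℝ) : zeroOneRisk α u - min α (1 - α) ≤ |2 * α - 1| := by
  grind [zeroOneRisk]

lemma zeroOneRisk_eq_min (h : 0 < (2 * α - 1) * u) : zeroOneRisk α u = min α (1 - α) := by
  rcases pos_and_pos_or_neg_and_neg_of_mul_pos h with ⟨hα, hu⟩ | ⟨hα, hu⟩ <;> grind [zeroOneRisk]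

lemma zeroOneRisk_sub_min_le_sqrt (hα : α ∈ Set.Icc 0 1) (u : ℝ) :
    zeroOneRisk α u - min α (1 - α) ≤ √2 * √(logisticRisk α u - binEntropy α) := by
  rcases lt_or_ge 0 ((2 * α - 1) * u) with hagree | hdisagree
  · rw [zeroOneRisk_eq_min hagree, sub_self]
    positivity
  · have hregret : (2 * α - 1) ^ 2 ≤ 2 * (logisticRisk α u - binEntropy α) := by
      linarith [log_two_le_logisticRisk hdisagree, binEntropy_le_log_two_sub_half_sq hα]
    calc zeroOneRisk α u - min α (1 - α) ≤ |2 * α - 1| := zeroOneRisk_sub_min_le_abs α u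
      _ ≤ √(2 * (logisticRisk α u - binEntropy α)) := abs_le_sqrt hregret
      _ = √2 * √(logisticRisk α u - binEntropy α) := sqrt_mul zero_le_two _

end

theorem logistic_binary_Hconsistency_bound
    (α : ℝ) (hα : α ∈ Set.Icc (0 : ℝ) 1) (u : ℝ) :
    (α * (if u < 0 then (1 : ℝ) else 0) + (1 - α) * (if 0 ≤ u then (1 : ℝ) else 0))
        - min α (1 - α)
      ≤ Real.sqrt 2 *
        Real.sqrt (α * Real.log (1 + Real.exp (-u)) + (1 - α) * Real.log (1 + Real.exp u)
          - (-(α * Real.log α) - (1 - α) * Real.log (1 - α)))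
    ∧ (-(α * Real.log α) - (1 - α) * Real.log (1 - α))
        = ⨅ u' : ℝ, (α * Real.log (1 + Real.exp (-u')) + (1 - α) * Real.log (1 + Real.exp u')) := by
  have hentropy : -(α * log α) - (1 - α) * log (1 - α) = binEntropy α := by
    rw [binEntropy, log_inv, log_inv]
    ring
  rw [hentropy]
  exact ⟨zeroOneRisk_sub_min_le_sqrt hα u, (isGLB_range_logisticRisk hα).ciInf_eq.symm⟩
end
end

section
/- For every conditional label distribution p on Y = {−1,+1}^l and every v ∈ ℝ^l, E_ham(v) − inf_{w∈ℝ^l} E_ham(w) ≤ √( 2·l·( E_br(v) − inf_{w∈ℝ^l} E_br(w) ) ), where E_ham(v) = ∑_{y∈Y} p(y) ∑_{i=1}^{l} 1{y_i ≠ sgn(v_i)} with sgn(t) = +1 if t ≥ 0 and −1 otherwise, and E_br(v) = ∑_{y∈Y} p(y) ∑_{i=1}^{l} log(1 + e^{−y_i·v_i}) is the binary relevance logistic surrogate conditional error. -/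
/-!
Every function of a `±1` label is affine in that label, so the conditional error of a coordinatewise
loss is a sum of binary risks that depend on the label distribution only through the means `d i` of
the labels. In one coordinate, the Hamming regret of a score `t` is `0` if the sign of `t` agrees
with that of `d`, and `|d|` otherwise. In the latter case the logistic risk
`log (2 cosh (t / 2)) - d t / 2` is at least `log 2`, whereas `cosh x ≤ exp (x ^ 2 / 2)` bounds it
at the score `2 d` by `log 2 - d ^ 2 / 2`; so the squared Hamming regret is at most twice the
decrease in logistic risk. Cauchy–Schwarz over the coordinates produces the factor `√l`.
-/

noncomputable section
open Real

/-- Conditional binary-relevance logistic surrogate error of the score vector `v`. -/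
def EbrLog {l : ℕ} (p : (Fin l → Bool) → ℝ) (v : Fin l → ℝ) : ℝ :=
  ∑ y, p y * ∑ i, Real.log (1 + Real.exp (-(signVal (y i) * v i)))

/-- The `i`-th marginal mean of a weight `p` on `±1` label vectors; it carries all the information
about `p` that a coordinatewise loss can see in coordinate `i`. -/
def labelMean {ι : Type*} [Fintype ι] [DecidableEq ι] (p : (ι → Bool) → ℝ) (i : ι) : ℝ :=
  ∑ y, p y * signVal (y i)

/-- Expected loss of the score `t` for a `±1` label. The label's law is parametrized by its mean
`d` instead of by `P(+1) = (1 + d) / 2`. -/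
def binaryRisk (L : Bool → ℝ → ℝ) (d t : ℝ) : ℝ :=
  (1 + d) / 2 * L true t + (1 - d) / 2 * L false t

/-- Zero-one loss of the sign of a score on a binary label; `Eham` is the expected value of
its sum over the coordinates. -/
def zeroOneLoss (b : Bool) (t : ℝ) : ℝ :=
  if signVal b = sgn t then 0 else 1

/-- Logistic loss of a score on a binary label; `EbrLog` is the expected value of its sum
over the coordinates. -/
def logisticLoss (b : Bool) (t : ℝ) : ℝ :=
  log (1 + exp (-(signVal b * t)))

theorem binaryRisk_signVal (L : Bool → ℝ → ℝ) (b : Bool) (t : ℝ) :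
    binaryRisk L (signVal b) t = L b t := by
  cases b <;> simp [binaryRisk, signVal]

theorem sum_mul_binaryRisk {α : Type*} [Fintype α] {p : α → ℝ} (hp1 : ∑ a, p a = 1)
    (L : Bool → ℝ → ℝ) (d : α → ℝ) (t : ℝ) :
    ∑ a, p a * binaryRisk L (d a) t = binaryRisk L (∑ a, p a * d a) t := by
  have affine (x : ℝ) : binaryRisk L x t =
      (L true t + L false t) / 2 + x * ((L true t - L false t) / 2) := by
    unfold binaryRisk; ring
  simp_rw [affine, mul_add, Finset.sum_add_distrib, ← mul_assoc, ← Finset.sum_mul, hp1, one_mul]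

theorem sum_mul_sum_loss_eq_sum_binaryRisk {ι : Type*} [Fintype ι] [DecidableEq ι]
    {p : (ι → Bool) → ℝ} (hp1 : ∑ y, p y = 1) (L : Bool → ℝ → ℝ) (v : ι → ℝ) :
    ∑ y, p y * ∑ i, L (y i) (v i) = ∑ i, binaryRisk L (labelMean p i) (v i) := by
  simp_rw [Finset.mul_sum]
  rw [Finset.sum_comm]
  simp_rw [← binaryRisk_signVal L, sum_mul_binaryRisk hp1, labelMean]

theorem mul_sgn_eq_abs_or (d t : ℝ) :
    d * sgn t = |d| ∨ d * sgn t = -|d| ∧ d * t ≤ 0 := by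
  unfold sgn
  split_ifs with ht <;> rcases le_total 0 d with hd | hd
  · simp [abs_of_nonneg hd]
  · simp [abs_of_nonpos hd, mul_nonpos_of_nonpos_of_nonneg hd ht]
  · simp [abs_of_nonneg hd, mul_nonpos_of_nonneg_of_nonpos hd (not_le.mp ht).le]
  · simp [abs_of_nonpos hd]

theorem mul_sgn_self (d : ℝ) : d * sgn d = |d| := by
  unfold sgn
  split_ifs with hd
  · rw [mul_one, abs_of_nonneg hd]
  · rw [mul_neg_one, abs_of_neg (not_le.mp hd)]

theorem binaryRisk_zeroOneLoss (d t : ℝ) :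
    binaryRisk zeroOneLoss d t = (1 - d * sgn t) / 2 := by
  unfold binaryRisk zeroOneLoss signVal sgn
  split_ifs <;> norm_num at *

theorem binaryRisk_zeroOneLoss_self_le (d t : ℝ) :
    binaryRisk zeroOneLoss d d ≤ binaryRisk zeroOneLoss d t := by
  rw [binaryRisk_zeroOneLoss, binaryRisk_zeroOneLoss, mul_sgn_self]
  rcases mul_sgn_eq_abs_or d t with h | ⟨h, -⟩ <;> linarith [abs_nonneg d]

theorem logisticLoss_nonneg (b : Bool) (t : ℝ) : 0 ≤ logisticLoss b t :=
  log_nonneg (le_add_of_nonneg_right (exp_nonneg _))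

theorem log_one_add_exp_neg (x : ℝ) :
    log (1 + exp (-x)) = log (2 * cosh (x / 2)) - x / 2 := by
  have factor : 1 + exp (-x) = 2 * cosh (x / 2) * exp (-(x / 2)) := by
    rw [cosh_eq, mul_div_cancel₀ _ two_ne_zero, add_mul, ← exp_add, ← exp_add]
    simp [← neg_add]
  rw [factor, log_mul (mul_pos two_pos (cosh_pos _)).ne' (exp_ne_zero _), log_exp, sub_eq_add_neg]

theorem binaryRisk_logisticLoss (d t : ℝ) :
    binaryRisk logisticLoss d t = log (2 * cosh (t / 2)) - d * (t / 2) := by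
  simp only [binaryRisk, logisticLoss, signVal, if_true, Bool.false_eq_true, if_false, one_mul,
    neg_one_mul, log_one_add_exp_neg, neg_div, cosh_neg]
  ring

theorem log_two_le_binaryRisk_logisticLoss {d t : ℝ} (h : d * t ≤ 0) :
    log 2 ≤ binaryRisk logisticLoss d t := by
  have : log 2 ≤ log (2 * cosh (t / 2)) :=
    log_le_log two_pos (le_mul_of_one_le_right zero_le_two (one_le_cosh _))
  rw [binaryRisk_logisticLoss]
  linarith

theorem binaryRisk_logisticLoss_two_mul_self_le (d : ℝ) :
    binaryRisk logisticLoss d (2 * d) ≤ log 2 - d ^ 2 / 2 := by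
  have log_cosh_le : log (cosh d) ≤ d ^ 2 / 2 :=
    (log_le_iff_le_exp (cosh_pos d)).mpr (cosh_le_exp_half_sq d)
  rw [binaryRisk_logisticLoss, mul_div_cancel_left₀ d two_ne_zero,
    log_mul two_ne_zero (cosh_pos d).ne']
  linarith

theorem exists_sq_binaryRisk_zeroOneLoss_sub_le (d t : ℝ) :
    ∃ s, (binaryRisk zeroOneLoss d t - binaryRisk zeroOneLoss d d) ^ 2 ≤
      2 * (binaryRisk logisticLoss d t - binaryRisk logisticLoss d s) := by
  have regret_eq : binaryRisk zeroOneLoss d t - binaryRisk zeroOneLoss d d =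
      (|d| - d * sgn t) / 2 := by
    rw [binaryRisk_zeroOneLoss, binaryRisk_zeroOneLoss, mul_sgn_self]
    ring
  rw [regret_eq]
  rcases mul_sgn_eq_abs_or d t with agree | ⟨disagree, hdt⟩
  · exact ⟨t, by simp [agree]⟩
  · refine ⟨2 * d, ?_⟩
    rw [disagree, sub_neg_eq_add, add_self_div_two, sq_abs]
    linarith [log_two_le_binaryRisk_logisticLoss hdt, binaryRisk_logisticLoss_two_mul_self_le d]

section ConditionalError

variable {l : ℕ} {p : (Fin l → Bool) → ℝ}

theorem Eham_eq_sum_binaryRisk (hp1 : ∑ y, p y = 1) (v : Fin l → ℝ) :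
    Eham p v = ∑ i, binaryRisk zeroOneLoss (labelMean p i) (v i) :=
  sum_mul_sum_loss_eq_sum_binaryRisk hp1 zeroOneLoss v

theorem EbrLog_eq_sum_binaryRisk (hp1 : ∑ y, p y = 1) (v : Fin l → ℝ) :
    EbrLog p v = ∑ i, binaryRisk logisticLoss (labelMean p i) (v i) :=
  sum_mul_sum_loss_eq_sum_binaryRisk hp1 logisticLoss v

theorem Eham_labelMean_le (hp1 : ∑ y, p y = 1) (v : Fin l → ℝ) :
    Eham p (labelMean p) ≤ Eham p v := by
  rw [Eham_eq_sum_binaryRisk hp1, Eham_eq_sum_binaryRisk hp1]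
  exact Finset.sum_le_sum fun i _ => binaryRisk_zeroOneLoss_self_le _ _

theorem bddBelow_range_EbrLog (hp0 : ∀ y, 0 ≤ p y) : BddBelow (Set.range (EbrLog p)) := by
  refine ⟨0, Set.forall_mem_range.mpr fun v => ?_⟩
  exact Finset.sum_nonneg fun y _ =>
    mul_nonneg (hp0 y) (Finset.sum_nonneg fun i _ => logisticLoss_nonneg (y i) (v i))

-- `w` depends on `v`: when some `|labelMean p i| = 1`, no score minimizes `EbrLog p`.
theorem exists_sq_Eham_sub_le (hp1 : ∑ y, p y = 1) (v : Fin l → ℝ) :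
    ∃ w, (Eham p v - Eham p (labelMean p)) ^ 2 ≤ 2 * l * (EbrLog p v - EbrLog p w) := by
  choose w hw using fun i => exists_sq_binaryRisk_zeroOneLoss_sub_le (labelMean p i) (v i)
  refine ⟨w, ?_⟩
  simp only [Eham_eq_sum_binaryRisk hp1, EbrLog_eq_sum_binaryRisk hp1, ← Finset.sum_sub_distrib]
  set regret : Fin l → ℝ := fun i => binaryRisk zeroOneLoss (labelMean p i) (v i) -
    binaryRisk zeroOneLoss (labelMean p i) (labelMean p i)
  set decrease : Fin l → ℝ := fun i => binaryRisk logisticLoss (labelMean p i) (v i) -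
    binaryRisk logisticLoss (labelMean p i) (w i)
  calc (∑ i, regret i) ^ 2
      ≤ l * ∑ i, regret i ^ 2 := by
        simpa using sq_sum_le_card_mul_sum_sq (s := Finset.univ) (f := regret)
    _ ≤ l * ∑ i, 2 * decrease i := by
        gcongr with i
        exact hw i
    _ = 2 * l * ∑ i, decrease i := by
        rw [← Finset.mul_sum]
        ring

end ConditionalError

theorem binary_relevance_logistic_Hconsistency_bound
    (l : ℕ) (hl : 1 ≤ l)
    (p : (Fin l → Bool) → ℝ) (hp0 : ∀ y, 0 ≤ p y) (hp1 : ∑ y, p y = 1)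
    (v : Fin l → ℝ) :
    Eham p v - ⨅ w : Fin l → ℝ, Eham p w
      ≤ Real.sqrt (2 * l * (EbrLog p v - ⨅ w : Fin l → ℝ, EbrLog p w)) := by
  obtain ⟨w, hw⟩ := exists_sq_Eham_sub_le hp1 v
  calc Eham p v - ⨅ u, Eham p u
      ≤ Eham p v - Eham p (labelMean p) := by
        gcongr
        exact le_ciInf (Eham_labelMean_le hp1)
    _ ≤ √(2 * l * (EbrLog p v - EbrLog p w)) := le_sqrt_of_sq_le hw
    _ ≤ √(2 * l * (EbrLog p v - ⨅ u, EbrLog p u)) := by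
        gcongr
        exact ciInf_le (bddBelow_range_EbrLog hp0) w
end
end

section
/- Let X and Y be nonempty finite types, P : X → Y → ℝ a joint probability mass function (P(x,y) ≥ 0 and ∑_{x,y} P(x,y) = 1) with marginal p(x) = ∑_y P(x,y). Let α be a type of hypotheses, H a nonempty subset of α, and ℓ, ℓ̃ : α → X → Y → ℝ two loss functions with 0 ≤ ℓ(h,x,y) ≤ 1 and 0 ≤ ℓ̃(h,x,y) ≤ B for all h ∈ H, x, y. For x with p(x) > 0 define the conditional errors C_ℓ(h,x) = (∑_y P(x,y)·ℓ(h,x,y))/p(x) and C_ℓ̃(h,x) = (∑_y P(x,y)·ℓ̃(h,x,y))/p(x), and the conditional regrets ΔC_ℓ(h,x) = C_ℓ(h,x) − inf_{h'∈H} C_ℓ(h',x), ΔC_ℓ̃(h,x) = C_ℓ̃(h,x) − inf_{h'∈H} C_ℓ̃(h',x). Define the risks R_ℓ(h) = ∑_{x,y} P(x,y)·ℓ(h,x,y), the best-in-class risks R*_ℓ = inf_{h∈H} R_ℓ(h), and the minimizability gaps M_ℓ = R*_ℓ − ∑_x p(x)·inf_{h∈H} C_ℓ(h,x) (similarly for ℓ̃).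 Let Γ : ℝ → ℝ be concave on [0,∞). If ΔC_ℓ(h,x) ≤ Γ(ΔC_ℓ̃(h,x)) for every h ∈ H and every x with p(x) > 0, then for every h ∈ H: R_ℓ(h) − R*_ℓ + M_ℓ ≤ Γ( R_ℓ̃(h) − R*_ℓ̃ + M_ℓ̃ ). -/
noncomputable section
open Real

/-- Conditional error of loss `L` for hypothesis `h` at point `x`. -/
def condErr {X Y α : Type*} [Fintype Y] (P : X → Y → ℝ) (L : α → X → Y → ℝ)
    (h : α) (x : X) : ℝ :=
  (∑ y, P x y * L h x y) / (∑ y, P x y)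

/-- Risk (generalization error) of loss `L` for hypothesis `h`. -/
def risk {X Y α : Type*} [Fintype X] [Fintype Y] (P : X → Y → ℝ)
    (L : α → X → Y → ℝ) (h : α) : ℝ :=
  ∑ x, ∑ y, P x y * L h x y

/-- Minimizability gap of loss `L` over the hypothesis set `H`. -/
def minimizabilityGap {X Y α : Type*} [Fintype X] [Fintype Y] (P : X → Y → ℝ)
    (L : α → X → Y → ℝ) (H : Set α) : ℝ :=
  sInf ((fun h' => risk P L h') '' H)
    - ∑ x, (∑ y, P x y) * sInf ((fun h' => condErr P L h' x) '' H)

/-!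
The best-in-class risk cancels from `R(h) - R* + M`, which leaves the average over `x`, weighted by
the marginal `p`, of the conditional regrets of `h`. The pointwise bound by `Γ` then passes to the
averages by Jensen's inequality.
-/

section Jensen

variable {𝕜 E β ι : Type*} [Field 𝕜] [LinearOrder 𝕜] [IsStrictOrderedRing 𝕜]
  [AddCommGroup E] [AddCommGroup β] [PartialOrder β] [IsOrderedAddMonoid β]
  [Module 𝕜 E] [Module 𝕜 β] [IsStrictOrderedModule 𝕜 β]
  {s : Set E} {Γ : E → β} {t : Finset ι} {w : ι → 𝕜} {f : ι → β} {g : ι → E}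

theorem sum_smul_le_map_sum_of_concaveOn (hΓ : ConcaveOn 𝕜 s Γ) (hw : ∀ i ∈ t, 0 ≤ w i)
    (hw1 : ∑ i ∈ t, w i = 1) (hg : ∀ i ∈ t, g i ∈ s)
    (hfg : ∀ i ∈ t, 0 < w i → f i ≤ Γ (g i)) :
    ∑ i ∈ t, w i • f i ≤ Γ (∑ i ∈ t, w i • g i) := by
  refine (Finset.sum_le_sum fun i hi => ?_).trans (hΓ.le_map_sum hw hw1 hg)
  rcases (hw i hi).eq_or_lt with h0 | hpos
  · simp only [← h0, zero_smul, le_refl]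
  · exact smul_le_smul_of_nonneg_left (hfg i hi hpos) hpos.le

end Jensen

section ConditionalRegret

variable {X Y α : Type*} [Fintype Y] {P : X → Y → ℝ} {L : α → X → Y → ℝ} {H : Set α}
  {h h' : α} {x : X}

/-- Conditional regret `ΔC_L(h, x)` of the hypothesis `h` at `x` relative to the class `H`. The
infimum is a real `sInf`, so it is `0` when the conditional errors are unbounded below on `H`. -/
def condRegret (P : X → Y → ℝ) (L : α → X → Y → ℝ) (H : Set α) (h : α) (x : X) : ℝ :=
  condErr P L h x - sInf ((fun h' => condErr P L h' x) '' H)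

theorem condErr_nonneg (hP : ∀ y, 0 ≤ P x y) (hL : ∀ y, 0 ≤ L h x y) : 0 ≤ condErr P L h x :=
  div_nonneg (Finset.sum_nonneg fun y _ => mul_nonneg (hP y) (hL y))
    (Finset.sum_nonneg fun y _ => hP y)

theorem bddBelow_condErr_image (hP : ∀ y, 0 ≤ P x y) (hL : ∀ h ∈ H, ∀ y, 0 ≤ L h x y) :
    BddBelow ((fun h => condErr P L h x) '' H) :=
  ⟨0, Set.forall_mem_image.2 fun h hh => condErr_nonneg hP (hL h hh)⟩

theorem condErr_sub_condErr_le_condRegret (hbdd : BddBelow ((fun h => condErr P L h x) '' H))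
    (hh' : h' ∈ H) : condErr P L h x - condErr P L h' x ≤ condRegret P L H h x :=
  sub_le_sub_left (csInf_le hbdd (Set.mem_image_of_mem _ hh')) _

theorem condRegret_nonneg (hbdd : BddBelow ((fun h => condErr P L h x) '' H)) (hh : h ∈ H) :
    0 ≤ condRegret P L H h x :=
  (sub_self (condErr P L h x)).ge.trans (condErr_sub_condErr_le_condRegret hbdd hh)

theorem condRegret_le {c : ℝ} (hH : H.Nonempty)
    (hc : ∀ h' ∈ H, condErr P L h x - condErr P L h' x ≤ c) : condRegret P L H h x ≤ c :=
  sub_le_comm.1 <| le_csInf (hH.image _) <| Set.forall_mem_image.2 fun h' hh' =>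
    sub_le_comm.1 (hc h' hh')

theorem sum_mul_condErr (hP : ∀ y, 0 ≤ P x y) (L : α → X → Y → ℝ) (h : α) :
    (∑ y, P x y) * condErr P L h x = ∑ y, P x y * L h x y := by
  refine mul_div_cancel_of_imp' fun hp => ?_
  have hPx : ∀ y ∈ Finset.univ, P x y = 0 :=
    (Finset.sum_eq_zero_iff_of_nonneg fun y _ => hP y).1 hp
  exact Finset.sum_eq_zero fun y hy => by rw [hPx y hy, zero_mul]

variable [Fintype X]

theorem risk_eq_sum_mul_condErr (hP : ∀ x y, 0 ≤ P x y) (L : α → X → Y → ℝ) (h : α) :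
    risk P L h = ∑ x, (∑ y, P x y) * condErr P L h x :=
  Finset.sum_congr rfl fun x _ => (sum_mul_condErr (hP x) L h).symm

theorem risk_sub_sInf_add_minimizabilityGap (hP : ∀ x y, 0 ≤ P x y) (L : α → X → Y → ℝ)
    (H : Set α) (h : α) :
    risk P L h - sInf ((fun h' => risk P L h') '' H) + minimizabilityGap P L H
      = ∑ x, (∑ y, P x y) * condRegret P L H h x := by
  simp only [minimizabilityGap, condRegret, mul_sub, Finset.sum_sub_distrib,
    ← risk_eq_sum_mul_condErr hP L h, sub_add_sub_cancel]

end ConditionalRegret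

-- The regret for `ℓ` is bounded through each competitor `h'` because `sInf` is `0` on a set that is
-- unbounded below.
theorem tool_Gamma_general {X Y α : Type*} [Fintype X] [Fintype Y]
    {P : X → Y → ℝ} (hP0 : ∀ x y, 0 ≤ P x y) (hP1 : ∑ x, ∑ y, P x y = 1)
    {H : Set α} {h : α} (hh : h ∈ H) {ℓ ℓt : α → X → Y → ℝ}
    (hℓt : ∀ x, BddBelow ((fun h' => condErr P ℓt h' x) '' H))
    {Γ : ℝ → ℝ} (hΓ : ConcaveOn ℝ (Set.Ici 0) Γ)
    (hcond : ∀ x, 0 < ∑ y, P x y → ∀ h' ∈ H,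
      condErr P ℓ h x - condErr P ℓ h' x ≤ Γ (condRegret P ℓt H h x)) :
    risk P ℓ h - sInf ((fun h' => risk P ℓ h') '' H) + minimizabilityGap P ℓ H
      ≤ Γ (risk P ℓt h - sInf ((fun h' => risk P ℓt h') '' H) + minimizabilityGap P ℓt H) := by
  rw [risk_sub_sInf_add_minimizabilityGap hP0, risk_sub_sInf_add_minimizabilityGap hP0]
  exact sum_smul_le_map_sum_of_concaveOn hΓ
    (fun x _ => Finset.sum_nonneg fun y _ => hP0 x y) hP1
    (fun x _ => condRegret_nonneg (hℓt x) hh)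
    (fun x _ hx => condRegret_le ⟨h, hh⟩ (hcond x hx))

theorem tool_Gamma {X Y α : Type*} [Fintype X] [Fintype Y] [Nonempty X] [Nonempty Y]
    (P : X → Y → ℝ) (hP0 : ∀ x y, 0 ≤ P x y) (hP1 : ∑ x, ∑ y, P x y = 1)
    (H : Set α) (hH : H.Nonempty)
    (ℓ ℓt : α → X → Y → ℝ) (B : ℝ)
    (hℓ : ∀ h ∈ H, ∀ x y, ℓ h x y ∈ Set.Icc (0 : ℝ) 1)
    (hℓt : ∀ h ∈ H, ∀ x y, ℓt h x y ∈ Set.Icc (0 : ℝ) B)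
    (Γ : ℝ → ℝ) (hΓ : ConcaveOn ℝ (Set.Ici 0) Γ)
    (hcond : ∀ h ∈ H, ∀ x, 0 < ∑ y, P x y →
      condErr P ℓ h x - sInf ((fun h' => condErr P ℓ h' x) '' H)
        ≤ Γ (condErr P ℓt h x - sInf ((fun h' => condErr P ℓt h' x) '' H))) :
    ∀ h ∈ H,
      risk P ℓ h - sInf ((fun h' => risk P ℓ h') '' H) + minimizabilityGap P ℓ H
        ≤ Γ (risk P ℓt h - sInf ((fun h' => risk P ℓt h') '' H)
            + minimizabilityGap P ℓt H) := by
  intro h hh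
  refine tool_Gamma_general hP0 hP1 hh
    (fun x => bddBelow_condErr_image (hP0 x) fun g hg y => (hℓt g hg x y).1) hΓ
    fun x hx h' hh' => (condErr_sub_condErr_le_condRegret ?_ hh').trans (hcond h hh x hx)
  exact bddBelow_condErr_image (hP0 x) fun g hg y => (hℓ g hg x y).1
end
end

section
/- Let l ≥ 1, Y = {−1,+1}^l, p a conditional label distribution on Y, and let L̄ be the normalized Hamming loss L̄(y', y) = (1/l)·∑_{i=1}^{l} 1{y'_i ≠ y_i}, with conditional costs c_{y'} = ∑_{y∈Y} p(y)·L̄(y', y). For a positive probability vector s on Y define the multi-label logistic conditional error G_log(s) = −∑_{y'∈Y} (1 − c_{y'})·log s_{y'}. If ĥ ∈ Y satisfies s_{ĥ} = max_{y'∈Y} s_{y'}, then c_{ĥ} − min_{y'∈Y} c_{y'} ≤ 2·√( G_log(s) − inf_{s'} G_log(s') ), where the infimum is over all positive probability vectors s' on Y. -/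
noncomputable section
open Real

/-- Normalized Hamming loss on label vectors encoded as Boolean vectors. -/
def hammingLoss (l : ℕ) (y' y : Fin l → Bool) : ℝ :=
  (1 / (l : ℝ)) * ∑ i, (if y' i = y i then (0 : ℝ) else 1)

/-- Conditional cost `c_{y'} = ∑_y p(y) L̄(y', y)` of predicting the label vector `y'`. -/
def condCost {l : ℕ} (p : (Fin l → Bool) → ℝ)
    (L : (Fin l → Bool) → (Fin l → Bool) → ℝ) (y' : Fin l → Bool) : ℝ :=
  ∑ y, p y * L y' y

/-- The set of positive probability vectors on `Y = {−1,+1}^l`. -/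
def probVecs (l : ℕ) : Set ((Fin l → Bool) → ℝ) :=
  {s | (∀ y', 0 < s y') ∧ ∑ y', s y' = 1}

/-- Multi-label logistic conditional error `G_log(s) = −∑_{y'} (1 − c_{y'}) log s_{y'}`. -/
def Glog {l : ℕ} (c : (Fin l → Bool) → ℝ) (s : (Fin l → Bool) → ℝ) : ℝ :=
  -∑ y', (1 - c y') * Real.log (s y')

/-! Write `a = 1 - c y` and `b = 1 - c ĥ`, where `y` minimizes the cost, and let `m` be the mean of
`s y` and `s ĥ`. Replacing these two scores by `m (1 + x)` and `m (1 - x)` with `x = (a - b) / 2`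
keeps the total mass. Since `s y ≤ s ĥ` while `b ≤ a`, averaging the two scores does not increase
the logistic error, and the subsequent tilt lowers it by `a log (1 + x) + b log (1 - x)`, which is
at least `x ^ 2` by Pinsker's inequality for a biased against a fair coin. Splitting the mass in the
optimal ratio `a : b` instead would not give a positive vector when `b = 0`. -/

section LogInequalities

theorem sq_le_one_add_mul_log_add_one_sub_mul_log {x : ℝ} (hx : |x| < 1) :
    x ^ 2 ≤ (1 + x) * log (1 + x) + (1 - x) * log (1 - x) := by
  obtain ⟨hx_lower, hx_upper⟩ := abs_lt.mp hx
  have hsq : |x ^ 2| < 1 := by rwa [abs_pow, sq_lt_one_iff₀ (abs_nonneg x)]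
  have hlog : log (1 - x ^ 2) = log (1 + x) + log (1 - x) := by
    rw [← log_mul (by linarith) (by linarith)]
    ring_nf
  have hsplit : (1 + x) * log (1 + x) + (1 - x) * log (1 - x) =
      x * (log (1 + x) - log (1 - x)) - -log (1 - x ^ 2) := by
    rw [hlog]
    ring
  have hterm (k : ℕ) : (x ^ 2) ^ (k + 1) * (2 / (2 * k + 1) - 1 / (k + 1)) =
      x * (2 * (1 / (2 * k + 1)) * x ^ (2 * k + 1)) - (x ^ 2) ^ (k + 1) / (k + 1) := by
    ring
  have hseries : HasSum (fun k : ℕ ↦ (x ^ 2) ^ (k + 1) * (2 / (2 * k + 1) - 1 / (k + 1)))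
      ((1 + x) * log (1 + x) + (1 - x) * log (1 - x)) := by
    simp_rw [hsplit, hterm]
    exact ((hasSum_log_sub_log_of_abs_lt_one hx).mul_left x).sub
      (hasSum_pow_div_log_of_abs_lt_one hsq)
  have hcoeff (k : ℕ) : (0 : ℝ) ≤ 2 / (2 * k + 1) - 1 / (k + 1) := by
    rw [sub_nonneg, div_le_div_iff₀ (by positivity) (by positivity)]
    linarith
  calc x ^ 2 = (x ^ 2) ^ (0 + 1) * (2 / (2 * (0 : ℕ) + 1) - 1 / ((0 : ℕ) + 1)) := by norm_num
    _ ≤ (1 + x) * log (1 + x) + (1 - x) * log (1 - x) :=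
        le_hasSum hseries 0 fun k _ ↦ mul_nonneg (by positivity) (hcoeff k)

theorem sq_half_sub_le_mul_log_add_mul_log {a b : ℝ} (hab : a + b ≤ 2)
    (hx : |(a - b) / 2| < 1) :
    ((a - b) / 2) ^ 2 ≤ a * log (1 + (a - b) / 2) + b * log (1 - (a - b) / 2) := by
  set x := (a - b) / 2 with hx_def
  obtain ⟨hx_lower, hx_upper⟩ := abs_lt.mp hx
  have hlog : log (1 + x) + log (1 - x) ≤ 0 := by
    linarith [log_le_sub_one_of_pos (show 0 < 1 + x by linarith),
      log_le_sub_one_of_pos (show 0 < 1 - x by linarith)]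
  calc x ^ 2 ≤ (1 + x) * log (1 + x) + (1 - x) * log (1 - x) :=
        sq_le_one_add_mul_log_add_one_sub_mul_log hx
    _ ≤ (1 + x) * log (1 + x) + (1 - x) * log (1 - x)
          + ((a + b) / 2 - 1) * (log (1 + x) + log (1 - x)) :=
        le_add_of_nonneg_right (mul_nonneg_of_nonpos_of_nonpos (by linarith) hlog)
    _ = a * log (1 + x) + b * log (1 - x) := by
        rw [hx_def]
        ring

theorem abs_half_sub_lt_one {a b : ℝ} (ha : a ∈ Set.Icc 0 1) (hb : b ∈ Set.Icc 0 1) :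
    |(a - b) / 2| < 1 := by
  rw [abs_lt]
  constructor <;> linarith [ha.1, ha.2, hb.1, hb.2]

theorem log_add_log_le_two_mul_log_half_add {u v : ℝ} (hu : 0 < u) (hv : 0 < v) :
    log u + log v ≤ 2 * log ((u + v) / 2) := by
  have hconcave := strictConcaveOn_log_Ioi.concaveOn.2 (Set.mem_Ioi.mpr hu) (Set.mem_Ioi.mpr hv)
    (by norm_num : (0 : ℝ) ≤ 1 / 2) (by norm_num : (0 : ℝ) ≤ 1 / 2) (by norm_num)
  have hmid : (1 / 2 : ℝ) • u + (1 / 2 : ℝ) • v = (u + v) / 2 := by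
    simp only [smul_eq_mul]
    ring
  rw [hmid, smul_eq_mul, smul_eq_mul] at hconcave
  linarith

theorem mul_log_add_mul_log_le_add_mul_log_half_add {a b u v : ℝ} (hab : 0 ≤ a + b) (hba : b ≤ a)
    (hu : 0 < u) (huv : u ≤ v) :
    a * log u + b * log v ≤ (a + b) * log ((u + v) / 2) := by
  have hrearrange : 0 ≤ (a - b) * (log v - log u) :=
    mul_nonneg (sub_nonneg.mpr hba) (sub_nonneg.mpr (log_le_log hu huv))
  calc a * log u + b * log v ≤ (a + b) / 2 * (log u + log v) := by linarith
    _ ≤ (a + b) / 2 * (2 * log ((u + v) / 2)) :=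
        mul_le_mul_of_nonneg_left (log_add_log_le_two_mul_log_half_add hu (hu.trans_le huv))
          (by linarith)
    _ = (a + b) * log ((u + v) / 2) := by ring

end LogInequalities

section CrossEntropy

variable {ι : Type*}

/-- The probability vectors on `ι` with positive entries; `probVecs l` is the case
`ι = Fin l → Bool`. -/
def positiveSimplex (ι : Type*) [Fintype ι] : Set (ι → ℝ) :=
  {s | (∀ i, 0 < s i) ∧ ∑ i, s i = 1}

/-- The cross entropy of the scores `s` relative to weights `w`, which need not sum to `1`;
`Glog c` is the case `w = 1 - c`. -/
def crossEntropy [Fintype ι] (w s : ι → ℝ) : ℝ :=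
  -∑ i, w i * log (s i)

/-- The competitor to `s` that shares the mass of `i` and `j` between them in the ratio
`1 + x : 1 - x`; meant for `i ≠ j`. -/
def rebalance [DecidableEq ι] (s : ι → ℝ) (i j : ι) (x : ℝ) : ι → ℝ :=
  Function.update (Function.update s i ((s i + s j) / 2 * (1 + x))) j ((s i + s j) / 2 * (1 - x))

section Rebalance

variable [DecidableEq ι] {s : ι → ℝ} {i j k : ι} {x : ℝ}

theorem rebalance_apply_left (hij : i ≠ j) :
    rebalance s i j x i = (s i + s j) / 2 * (1 + x) := by
  simp [rebalance, hij]

theorem rebalance_apply_right : rebalance s i j x j = (s i + s j) / 2 * (1 - x) := by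
  simp [rebalance]

theorem rebalance_apply_of_ne (hki : k ≠ i) (hkj : k ≠ j) : rebalance s i j x k = s k := by
  simp [rebalance, hki, hkj]

theorem rebalance_pos (hs : ∀ k, 0 < s k) (hx : |x| < 1) (k : ι) : 0 < rebalance s i j x k := by
  obtain ⟨hx_lower, hx_upper⟩ := abs_lt.mp hx
  have hmean : 0 < (s i + s j) / 2 := half_pos (add_pos (hs i) (hs j))
  simp only [rebalance, Function.update_apply]
  split_ifs
  · exact mul_pos hmean (by linarith)
  · exact mul_pos hmean (by linarith)
  · exact hs k

variable [Fintype ι]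

theorem sum_rebalance_sub_sum (hij : i ≠ j) (g : ι → ℝ → ℝ) :
    ∑ k, g k (rebalance s i j x k) - ∑ k, g k (s k) =
      (g i ((s i + s j) / 2 * (1 + x)) - g i (s i)) +
        (g j ((s i + s j) / 2 * (1 - x)) - g j (s j)) := by
  rw [← Finset.sum_sub_distrib, Fintype.sum_eq_add i j hij, rebalance_apply_left hij,
    rebalance_apply_right]
  rintro k ⟨hki, hkj⟩
  rw [rebalance_apply_of_ne hki hkj, sub_self]

theorem rebalance_mem_positiveSimplex (hs : s ∈ positiveSimplex ι) (hij : i ≠ j) (hx : |x| < 1) :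
    rebalance s i j x ∈ positiveSimplex ι := by
  refine ⟨rebalance_pos hs.1 hx, ?_⟩
  have hmass := sum_rebalance_sub_sum (s := s) (x := x) hij fun _ r ↦ r
  linarith [hs.2]

theorem crossEntropy_sub_crossEntropy_rebalance (w : ι → ℝ) (hs : ∀ k, 0 < s k) (hij : i ≠ j)
    (hx : |x| < 1) :
    crossEntropy w s - crossEntropy w (rebalance s i j x) =
      ((w i + w j) * log ((s i + s j) / 2) - (w i * log (s i) + w j * log (s j))) +
        (w i * log (1 + x) + w j * log (1 - x)) := by
  obtain ⟨hx_lower, hx_upper⟩ := abs_lt.mp hx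
  have hmean : (s i + s j) / 2 ≠ 0 := (half_pos (add_pos (hs i) (hs j))).ne'
  have hchange := sum_rebalance_sub_sum (s := s) (x := x) hij fun k r ↦ w k * log r
  rw [log_mul hmean (by linarith), log_mul hmean (by linarith)] at hchange
  unfold crossEntropy
  linarith

theorem sq_half_sub_le_crossEntropy_sub_crossEntropy_rebalance {w : ι → ℝ}
    (hw : ∀ k, w k ∈ Set.Icc 0 1) (hs : ∀ k, 0 < s k) (hij : i ≠ j) (hwij : w j ≤ w i)
    (hsij : s i ≤ s j) :
    ((w i - w j) / 2) ^ 2 ≤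
      crossEntropy w s - crossEntropy w (rebalance s i j ((w i - w j) / 2)) := by
  have hx := abs_half_sub_lt_one (hw i) (hw j)
  have haverage := mul_log_add_mul_log_le_add_mul_log_half_add
    (add_nonneg (hw i).1 (hw j).1) hwij (hs i) hsij
  have htilt := sq_half_sub_le_mul_log_add_mul_log (by linarith [(hw i).2, (hw j).2]) hx
  rw [crossEntropy_sub_crossEntropy_rebalance w hs hij hx]
  linarith

end Rebalance

variable [Fintype ι] {w s : ι → ℝ}

theorem crossEntropy_nonneg (hw : ∀ i, 0 ≤ w i) (hs : s ∈ positiveSimplex ι) :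
    0 ≤ crossEntropy w s := by
  have hs_le_one (i : ι) : s i ≤ 1 :=
    hs.2 ▸ Finset.single_le_sum (fun j _ ↦ (hs.1 j).le) (Finset.mem_univ i)
  exact neg_nonneg.mpr <| Finset.sum_nonpos fun i _ ↦
    mul_nonpos_of_nonneg_of_nonpos (hw i) (log_nonpos (hs.1 i).le (hs_le_one i))

theorem sInf_crossEntropy_le (hw : ∀ i, 0 ≤ w i) (hs : s ∈ positiveSimplex ι) :
    sInf (crossEntropy w '' positiveSimplex ι) ≤ crossEntropy w s :=
  csInf_le ⟨0, Set.forall_mem_image.mpr fun _ ht ↦ crossEntropy_nonneg hw ht⟩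
    (Set.mem_image_of_mem _ hs)

theorem sub_le_two_mul_sqrt_crossEntropy_sub_sInf (hw : ∀ i, w i ∈ Set.Icc 0 1)
    (hs : s ∈ positiveSimplex ι) {i j : ι} (hsij : s i ≤ s j) :
    w i - w j ≤ 2 * √(crossEntropy w s - sInf (crossEntropy w '' positiveSimplex ι)) := by
  classical
  rcases le_or_gt (w i) (w j) with hle | hlt
  · exact (sub_nonpos.mpr hle).trans (by positivity)
  have hij : i ≠ j := fun h ↦ hlt.ne' (congrArg w h)
  have hgap : ((w i - w j) / 2) ^ 2 ≤
      crossEntropy w s - sInf (crossEntropy w '' positiveSimplex ι) :=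
    (sq_half_sub_le_crossEntropy_sub_crossEntropy_rebalance hw hs.1 hij hlt.le hsij).trans <|
      sub_le_sub_left (sInf_crossEntropy_le (fun k ↦ (hw k).1)
        (rebalance_mem_positiveSimplex hs hij (abs_half_sub_lt_one (hw i) (hw j)))) _
  linarith [le_sqrt_of_sq_le hgap]

end CrossEntropy

section HammingCost

variable {l : ℕ}

theorem hammingLoss_mem_Icc (y' y : Fin l → Bool) : hammingLoss l y' y ∈ Set.Icc 0 1 := by
  have hterm (i : Fin l) : (if y' i = y i then (0 : ℝ) else 1) ∈ Set.Icc 0 1 := by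
    split_ifs <;> simp
  have hsum_nonneg : 0 ≤ ∑ i, (if y' i = y i then (0 : ℝ) else 1) :=
    Finset.sum_nonneg fun i _ ↦ (hterm i).1
  have hsum_le : ∑ i, (if y' i = y i then (0 : ℝ) else 1) ≤ l := by
    simpa using Finset.sum_le_card_nsmul Finset.univ _ 1 fun i _ ↦ (hterm i).2
  rw [hammingLoss, one_div_mul_eq_div]
  exact ⟨div_nonneg hsum_nonneg l.cast_nonneg, div_le_one_of_le₀ hsum_le l.cast_nonneg⟩

theorem condCost_mem_Icc {p : (Fin l → Bool) → ℝ} (hp0 : ∀ y, 0 ≤ p y) (hp1 : ∑ y, p y = 1)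
    {L : (Fin l → Bool) → (Fin l → Bool) → ℝ} {y' : Fin l → Bool} {a b : ℝ}
    (hL : ∀ y, L y' y ∈ Set.Icc a b) : condCost p L y' ∈ Set.Icc a b :=
  (convex_Icc a b).sum_mem (fun y _ ↦ hp0 y) hp1 fun y _ ↦ hL y

end HammingCost

theorem log_bound_hamming_general {ι : Type*} [Fintype ι] {c s : ι → ℝ}
    (hc : ∀ i, c i ∈ Set.Icc 0 1) (hs : s ∈ positiveSimplex ι) {j : ι} (hmax : ∀ i, s i ≤ s j) :
    c j - ⨅ i, c i ≤ 2 * √(crossEntropy (fun i ↦ 1 - c i) s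
      - sInf (crossEntropy (fun i ↦ 1 - c i) '' positiveSimplex ι)) := by
  have : Nonempty ι := ⟨j⟩
  obtain ⟨i, hi⟩ := exists_eq_ciInf_of_finite (f := c)
  have hw (k : ι) : 1 - c k ∈ Set.Icc (0 : ℝ) 1 := Set.Icc.mem_iff_one_sub_mem.mp (hc k)
  rw [← hi, ← sub_sub_sub_cancel_left (c i) (c j) 1]
  exact sub_le_two_mul_sqrt_crossEntropy_sub_sInf hw hs (hmax i)

theorem log_bound_hamming (l : ℕ) (hl : 1 ≤ l)
    (p : (Fin l → Bool) → ℝ) (hp0 : ∀ y, 0 ≤ p y) (hp1 : ∑ y, p y = 1)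
    (s : (Fin l → Bool) → ℝ) (hs : s ∈ probVecs l)
    (hhat : Fin l → Bool) (hmax : ∀ y', s y' ≤ s hhat) :
    condCost p (hammingLoss l) hhat - ⨅ y' : Fin l → Bool, condCost p (hammingLoss l) y'
      ≤ 2 * Real.sqrt (Glog (condCost p (hammingLoss l)) s
          - sInf ((fun s' => Glog (condCost p (hammingLoss l)) s') '' probVecs l)) :=
  log_bound_hamming_general (fun y' ↦ condCost_mem_Icc hp0 hp1 (hammingLoss_mem_Icc y')) hs hmax
end
end

section
/- Let l ≥ 1, Y = {−1,+1}^l with n = 2^l, p a conditional label distribution on Y, L̄ : Y × Y → [0,1] a multi-label loss, and c_{y'} = ∑_{y∈Y} p(y)·L̄(y', y). For a positive probability vector s on Y define the multi-label mean-absolute-error conditional error G_mae(s) = ∑_{y'∈Y} (1 − c_{y'})·(1 − s_{y'}). If ĥ ∈ Y satisfies s_{ĥ} = max_{y'∈Y} s_{y'}, then c_{ĥ} − min_{y'∈Y} c_{y'} ≤ n·( G_mae(s) − inf_{s'} G_mae(s') ), where the infimum is over all positive probability vectors s' on Y. -/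
noncomputable section
open Real

/-- Multi-label mean-absolute-error conditional error
`G_mae(s) = ∑_{y'} (1 − c_{y'}) (1 − s_{y'})`. -/
def Gmae {l : ℕ} (c : (Fin l → Bool) → ℝ) (s : (Fin l → Bool) → ℝ) : ℝ :=
  ∑ y', (1 - c y') * (1 - s y')

/-! On the probability simplex the mean-absolute-error conditional error is, up to an additive
constant, the linear functional `s ↦ ∑ i, c i * s i`. Its minimum over the simplex is `min c`,
attained at a vertex, and vertices are limits of positive vectors. So the error regret of `s` is
`∑ i, (c i - min c) * s i`, a sum of nonnegative terms in which a maximizer of `s` has weight at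
least `1 / n`. -/

section PosSimplex

variable (ι : Type*) [Fintype ι]

/-- The open probability simplex, i.e. the positive probability vectors on a finite type; this is
`probVecs` over an arbitrary index type. -/
def posSimplex : Set (ι → ℝ) :=
  {s | (∀ i, 0 < s i) ∧ ∑ i, s i = 1}

theorem posSimplex_subset_stdSimplex : posSimplex ι ⊆ stdSimplex ℝ ι :=
  fun _ hs => ⟨fun i => (hs.1 i).le, hs.2⟩

theorem posSimplex_nonempty [Nonempty ι] : (posSimplex ι).Nonempty :=
  ⟨fun _ => (Fintype.card ι : ℝ)⁻¹, fun _ => by positivity, by simp⟩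

variable {ι}

theorem openSegment_subset_posSimplex {s t : ι → ℝ} (hs : s ∈ stdSimplex ℝ ι)
    (ht : t ∈ posSimplex ι) : openSegment ℝ s t ⊆ posSimplex ι := by
  rintro _ ⟨a, b, ha, hb, hab, rfl⟩
  have ht' := posSimplex_subset_stdSimplex ι ht
  refine ⟨fun i => ?_, (convex_stdSimplex ℝ ι hs ht' ha.le hb.le hab).2⟩
  exact add_pos_of_nonneg_of_pos (mul_nonneg ha.le (hs.1 i)) (mul_pos hb (ht.1 i))

variable (ι) in
theorem stdSimplex_subset_closure_posSimplex : stdSimplex ℝ ι ⊆ closure (posSimplex ι) := by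
  cases isEmpty_or_nonempty ι
  · simp only [stdSimplex_of_isEmpty_index, Set.empty_subset]
  intro s hs
  obtain ⟨t, ht⟩ := posSimplex_nonempty ι
  exact closure_mono (openSegment_subset_posSimplex hs ht)
    (segment_subset_closure_openSegment (left_mem_segment ℝ s t))

theorem sum_sub_mul_eq_dotProduct_sub {s : ι → ℝ} (hs : ∑ i, s i = 1) (c : ι → ℝ) (m : ℝ) :
    ∑ i, (c i - m) * s i = c ⬝ᵥ s - m := by
  simp only [dotProduct, sub_mul, Finset.sum_sub_distrib, ← Finset.mul_sum, hs, mul_one]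

theorem sub_iInf_mul_le_dotProduct_sub_iInf {s : ι → ℝ} (hs : s ∈ stdSimplex ℝ ι) (c : ι → ℝ)
    (i : ι) : (c i - ⨅ j, c j) * s i ≤ c ⬝ᵥ s - ⨅ j, c j := by
  rw [← sum_sub_mul_eq_dotProduct_sub hs.2]
  exact Finset.single_le_sum (f := fun i => (c i - ⨅ j, c j) * s i)
    (fun j _ => mul_nonneg (sub_nonneg.2 (Finite.ciInf_le c j)) (hs.1 j)) (Finset.mem_univ i)

theorem iInf_le_dotProduct [Nonempty ι] {s : ι → ℝ} (hs : s ∈ stdSimplex ℝ ι) (c : ι → ℝ) :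
    ⨅ i, c i ≤ c ⬝ᵥ s := by
  obtain ⟨i⟩ := ‹Nonempty ι›
  exact sub_nonneg.1 <|
    (mul_nonneg (sub_nonneg.2 (Finite.ciInf_le c i)) (hs.1 i)).trans
      (sub_iInf_mul_le_dotProduct_sub_iInf hs c i)

theorem isGLB_dotProduct_image_posSimplex [Nonempty ι] (c : ι → ℝ) :
    IsGLB ((c ⬝ᵥ ·) '' posSimplex ι) (⨅ i, c i) := by
  classical
  refine isGLB_of_mem_closure ?_ ?_
  · rintro _ ⟨s, hs, rfl⟩
    exact iInf_le_dotProduct (posSimplex_subset_stdSimplex ι hs) c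
  · obtain ⟨i, hi⟩ := exists_eq_ciInf_of_finite (f := c)
    have hvertex : Pi.single i 1 ∈ closure (posSimplex ι) :=
      stdSimplex_subset_closure_posSimplex ι (single_mem_stdSimplex ℝ i)
    have hcont : Continuous (c ⬝ᵥ · : (ι → ℝ) → ℝ) := by fun_prop
    rw [← hi, ← dotProduct_single_one c i]
    exact image_closure_subset_closure_image hcont ⟨_, hvertex, rfl⟩

end PosSimplex

section MAE

variable {ι : Type*} [Fintype ι]

/-- The mean-absolute-error conditional error of the scores `s` when label `i` has conditional cost
`c i`; this is `Gmae` over an arbitrary index type. -/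
def maeError (c s : ι → ℝ) : ℝ :=
  ∑ i, (1 - c i) * (1 - s i)

theorem maeError_eq_add_dotProduct (c : ι → ℝ) {s : ι → ℝ} (hs : ∑ i, s i = 1) :
    maeError c s = (∑ i, (1 - c i) - 1) + c ⬝ᵥ s := by
  calc maeError c s = ∑ i, ((1 - c i) - s i + c i * s i) :=
        Finset.sum_congr rfl fun i _ => by ring
    _ = (∑ i, (1 - c i) - 1) + c ⬝ᵥ s := by
        rw [Finset.sum_add_distrib, Finset.sum_sub_distrib, hs, dotProduct]

theorem sInf_maeError_image_posSimplex [Nonempty ι] (c : ι → ℝ) :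
    sInf (maeError c '' posSimplex ι) = (∑ i, (1 - c i) - 1) + ⨅ i, c i := by
  have himage : maeError c '' posSimplex ι =
      OrderIso.addLeft (∑ i, (1 - c i) - 1) '' ((c ⬝ᵥ ·) '' posSimplex ι) := by
    rw [Set.image_image]
    exact Set.image_congr fun s hs => maeError_eq_add_dotProduct c hs.2
  rw [himage]
  exact ((OrderIso.addLeft _).isGLB_image'.2 (isGLB_dotProduct_image_posSimplex c)).csInf_eq
    (((posSimplex_nonempty ι).image _).image _)

theorem maeError_sub_sInf [Nonempty ι] (c : ι → ℝ) {s : ι → ℝ} (hs : ∑ i, s i = 1) :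
    maeError c s - sInf (maeError c '' posSimplex ι) = c ⬝ᵥ s - ⨅ i, c i := by
  rw [maeError_eq_add_dotProduct c hs, sInf_maeError_image_posSimplex, add_sub_add_left_eq_sub]

theorem comp_bound_mean_absolute_error_general (c : ι → ℝ) {s : ι → ℝ} (hs : s ∈ stdSimplex ℝ ι)
    {k : ι} (hmax : ∀ i, s i ≤ s k) :
    c k - ⨅ i, c i ≤
      Fintype.card ι * (maeError c s - sInf (maeError c '' posSimplex ι)) := by
  have : Nonempty ι := ⟨k⟩
  have hweight : 1 ≤ Fintype.card ι * s k := by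
    rw [← hs.2, ← nsmul_eq_mul]
    exact Finset.sum_le_card_nsmul _ _ _ fun i _ => hmax i
  calc c k - ⨅ i, c i
      ≤ (c k - ⨅ i, c i) * (Fintype.card ι * s k) :=
        le_mul_of_one_le_right (sub_nonneg.2 (Finite.ciInf_le c k)) hweight
    _ = Fintype.card ι * ((c k - ⨅ i, c i) * s k) := mul_left_comm _ _ _
    _ ≤ Fintype.card ι * (c ⬝ᵥ s - ⨅ i, c i) := by
        gcongr
        exact sub_iInf_mul_le_dotProduct_sub_iInf hs c k
    _ = Fintype.card ι * (maeError c s - sInf (maeError c '' posSimplex ι)) := by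
        rw [maeError_sub_sInf c hs.2]

end MAE

theorem comp_bound_mean_absolute_error (l : ℕ) (hl : 1 ≤ l)
    (p : (Fin l → Bool) → ℝ) (hp0 : ∀ y, 0 ≤ p y) (hp1 : ∑ y, p y = 1)
    (L : (Fin l → Bool) → (Fin l → Bool) → ℝ)
    (hL : ∀ y' y, L y' y ∈ Set.Icc (0 : ℝ) 1)
    (s : (Fin l → Bool) → ℝ) (hs : s ∈ probVecs l)
    (hhat : Fin l → Bool) (hmax : ∀ y', s y' ≤ s hhat) :
    condCost p L hhat - ⨅ y' : Fin l → Bool, condCost p L y'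
      ≤ (2 : ℝ) ^ l * (Gmae (condCost p L) s
          - sInf ((fun s' => Gmae (condCost p L) s') '' probVecs l)) := by
  have hcard : (Fintype.card (Fin l → Bool) : ℝ) = 2 ^ l := by simp
  rw [← hcard]
  exact comp_bound_mean_absolute_error_general _ (posSimplex_subset_stdSimplex _ hs) hmax
end
end

section
/- Let l ≥ 1, Y = {−1,+1}^l, p a conditional label distribution on Y, L̄ : Y × Y → [0,1] a multi-label loss, and c_{y'} = ∑_{y∈Y} p(y)·L̄(y', y). For a centered score vector z on Y define the multi-label constrained squared-hinge conditional error G(z) = ∑_{y'∈Y} c_{y'}·(max(0, 1 + z_{y'}))². If ĥ ∈ Y satisfies z_{ĥ} = max_{y'∈Y} z_{y'}, then c_{ĥ} − min_{y'∈Y} c_{y'} ≤ 2·√( G(z) − inf_{z'} G(z') ), where the infimum is over all centered score vectors z' on Y. -/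
noncomputable section
open Real

/-- The set of centered score vectors on `Y = {−1,+1}^l` (zero-sum constraint). -/
def centeredVecs (l : ℕ) : Set ((Fin l → Bool) → ℝ) :=
  {z | ∑ y', z y' = 0}

/-- Multi-label constrained squared-hinge conditional error
`G(z) = ∑_{y'} c_{y'} (max(0, 1 + z_{y'}))²`. -/
def GcstndSqHinge {l : ℕ} (c : (Fin l → Bool) → ℝ) (z : (Fin l → Bool) → ℝ) : ℝ :=
  ∑ y', c y' * max 0 (1 + z y') ^ 2

/-!
Moving an amount `t` of score from the predicted label `i` to a cheaper label `j` keeps the score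
vector centered, and lowers the error by at least `2 (c i - c j) t - (c i + c j) t ^ 2`: a maximal
score of a centered vector is nonnegative, so the hinge at `i` is active with slope at least `2`,
and by convexity the error at `j` grows at most as fast as it would from the larger score `z i`.
The optimal `t = (c i - c j) / (c i + c j)` gives `(c i - c j) ^ 2 ≤ (c i + c j) * regret`.
-/

section ScoreTransfer

variable {ι : Type*} [DecidableEq ι]

/-- The score vector obtained from `z` by moving an amount `t` of score from `i` to `j`; it is the
competitor against which the regret of `z` is bounded from below. -/
def scoreTransfer (z : ι → ℝ) (i j : ι) (t : ℝ) : ι → ℝ :=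
  z - Pi.single i t + Pi.single j t

variable (z : ι → ℝ) {i j : ι} (t : ℝ)

lemma scoreTransfer_apply_source (hij : i ≠ j) : scoreTransfer z i j t i = z i - t := by
  simp [scoreTransfer, hij]

lemma scoreTransfer_apply_target (hij : i ≠ j) : scoreTransfer z i j t j = z j + t := by
  simp [scoreTransfer, hij.symm]

lemma scoreTransfer_apply_of_ne {k : ι} (hi : k ≠ i) (hj : k ≠ j) :
    scoreTransfer z i j t k = z k := by
  simp [scoreTransfer, hi, hj]

variable [Fintype ι]

lemma sum_scoreTransfer (i j : ι) : ∑ k, scoreTransfer z i j t k = ∑ k, z k := by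
  simp [scoreTransfer, Finset.sum_add_distrib, Finset.sum_sub_distrib]

lemma sum_sub_sum_scoreTransfer (f : ι → ℝ → ℝ) (hij : i ≠ j) :
    ∑ k, f k (z k) - ∑ k, f k (scoreTransfer z i j t k)
      = (f i (z i) - f i (z i - t)) + (f j (z j) - f j (z j + t)) := by
  rw [← Finset.sum_sub_distrib, Fintype.sum_eq_add i j hij,
    scoreTransfer_apply_source z t hij, scoreTransfer_apply_target z t hij]
  rintro k ⟨hi, hj⟩
  rw [scoreTransfer_apply_of_ne z t hi hj, sub_self]

end ScoreTransfer

lemma max_zero_add_sq_sub_le {u v t : ℝ} (hu : 0 ≤ u) (hvu : v ≤ u) (ht : 0 ≤ t) :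
    max 0 (v + t) ^ 2 - max 0 v ^ 2 ≤ 2 * u * t + t ^ 2 := by
  have hstep : max 0 (v + t) ≤ max 0 v + t :=
    max_le (by positivity) (by gcongr; exact le_max_right 0 v)
  calc max 0 (v + t) ^ 2 - max 0 v ^ 2
      ≤ (max 0 v + t) ^ 2 - max 0 v ^ 2 := by gcongr
    _ = 2 * max 0 v * t + t ^ 2 := by ring
    _ ≤ 2 * u * t + t ^ 2 := by gcongr; exact max_le hu hvu

lemma nonneg_of_sum_eq_zero_of_forall_le {ι : Type*} [Fintype ι] {z : ι → ℝ} {i : ι}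
    (hz : ∑ k, z k = 0) (hmax : ∀ k, z k ≤ z i) : 0 ≤ z i := by
  obtain ⟨k, -, hk⟩ := Finset.exists_le_of_sum_le (s := .univ) (f := fun _ ↦ (0 : ℝ)) (g := z)
    ⟨i, Finset.mem_univ i⟩ (by rw [Finset.sum_const_zero, hz])
  exact hk.trans (hmax k)

section Regret

variable {ι : Type*} [Fintype ι]

/-- The constrained squared-hinge error `∑ i, c i * max 0 (1 + z i) ^ 2` of the score vector `z`
over an arbitrary finite label set with costs `c`; on `{−1,+1}^l` it is `GcstndSqHinge`. -/
def constrainedSqHingeError (c z : ι → ℝ) : ℝ :=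
  ∑ i, c i * max 0 (1 + z i) ^ 2

/-- The excess of the constrained squared-hinge error of `z` over its infimum on the centered
score vectors. The infimum is a real `sInf`, meaningful because costs are taken nonnegative. -/
def constrainedSqHingeRegret (c z : ι → ℝ) : ℝ :=
  constrainedSqHingeError c z - sInf (constrainedSqHingeError c '' {w | ∑ i, w i = 0})

variable {c z : ι → ℝ} {i j : ι}

lemma constrainedSqHingeError_nonneg (hc : ∀ k, 0 ≤ c k) (z : ι → ℝ) :
    0 ≤ constrainedSqHingeError c z :=
  Finset.sum_nonneg fun k _ ↦ mul_nonneg (hc k) (sq_nonneg _)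

lemma constrainedSqHingeError_sub_le_regret (hc : ∀ k, 0 ≤ c k) (z : ι → ℝ) {w : ι → ℝ}
    (hw : ∑ k, w k = 0) :
    constrainedSqHingeError c z - constrainedSqHingeError c w ≤ constrainedSqHingeRegret c z := by
  have hbdd : BddBelow (constrainedSqHingeError c '' {w | ∑ k, w k = 0}) :=
    ⟨0, Set.forall_mem_image.2 fun w _ ↦ constrainedSqHingeError_nonneg hc w⟩
  exact sub_le_sub_left (csInf_le hbdd (Set.mem_image_of_mem _ hw)) _

lemma le_constrainedSqHingeError_sub_scoreTransfer [DecidableEq ι] {t : ℝ} (hij : i ≠ j)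
    (hci : 0 ≤ c i) (hcj : 0 ≤ c j) (hz : z j ≤ z i) (ht : 0 ≤ t) (hti : t ≤ 1 + z i) :
    2 * (c i - c j) * (1 + z i) * t - (c i + c j) * t ^ 2
      ≤ constrainedSqHingeError c z - constrainedSqHingeError c (scoreTransfer z i j t) := by
  have hsource : 2 * (1 + z i) * t - t ^ 2
      ≤ max 0 (1 + z i) ^ 2 - max 0 (1 + (z i - t)) ^ 2 := by
    rw [max_eq_right (by linarith), max_eq_right (by linarith)]
    exact le_of_eq (by ring)
  have htarget : max 0 (1 + (z j + t)) ^ 2 - max 0 (1 + z j) ^ 2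
      ≤ 2 * (1 + z i) * t + t ^ 2 := by
    rw [← add_assoc]
    exact max_zero_add_sq_sub_le (ht.trans hti) (by gcongr) ht
  rw [constrainedSqHingeError, constrainedSqHingeError,
    sum_sub_sum_scoreTransfer z t (fun k x ↦ c k * max 0 (1 + x) ^ 2) hij]
  linarith [mul_le_mul_of_nonneg_left hsource hci, mul_le_mul_of_nonneg_left htarget hcj]

lemma sq_sub_div_add_le_constrainedSqHingeRegret (hc : ∀ k, 0 ≤ c k) (hz : ∑ k, z k = 0)
    (hmax : ∀ k, z k ≤ z i) (hji : c j < c i) :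
    (c i - c j) ^ 2 / (c i + c j) ≤ constrainedSqHingeRegret c z := by
  classical
  have hij : i ≠ j := fun h ↦ hji.ne (congrArg c h.symm)
  have hzi : 0 ≤ z i := nonneg_of_sum_eq_zero_of_forall_le hz hmax
  have hgap : 0 ≤ c i - c j := sub_nonneg.2 hji.le
  have hsum : 0 < c i + c j := by linarith [hc j]
  set t := (c i - c j) / (c i + c j) with ht_def
  have ht : 0 ≤ t := div_nonneg hgap hsum.le
  have ht_le : t ≤ 1 := (div_le_one hsum).2 (by linarith [hc j])
  calc (c i - c j) ^ 2 / (c i + c j)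
      = 2 * (c i - c j) * 1 * t - (c i + c j) * t ^ 2 := by rw [ht_def]; field_simp; ring
    _ ≤ 2 * (c i - c j) * (1 + z i) * t - (c i + c j) * t ^ 2 := by
        gcongr; exact le_add_of_nonneg_right hzi
    _ ≤ constrainedSqHingeError c z - constrainedSqHingeError c (scoreTransfer z i j t) :=
        le_constrainedSqHingeError_sub_scoreTransfer hij (hc i) (hc j) (hmax j) ht (by linarith)
    _ ≤ constrainedSqHingeRegret c z :=
        constrainedSqHingeError_sub_le_regret hc z (by rw [sum_scoreTransfer, hz])

lemma sub_le_sqrt_add_mul_sqrt_constrainedSqHingeRegret (hc : ∀ k, 0 ≤ c k)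
    (hz : ∑ k, z k = 0) (hmax : ∀ k, z k ≤ z i) (j : ι) :
    c i - c j ≤ √(c i + c j) * √(constrainedSqHingeRegret c z) := by
  rcases le_or_gt (c i) (c j) with hle | hlt
  · exact (sub_nonpos.2 hle).trans (by positivity)
  · have hsum : 0 < c i + c j := by linarith [hc j]
    rw [← Real.sqrt_mul hsum.le]
    exact Real.le_sqrt_of_sq_le
      ((div_le_iff₀' hsum).1 (sq_sub_div_add_le_constrainedSqHingeRegret hc hz hmax hlt))

theorem cstnd_bound_squared_hinge_general (hc : ∀ k, 0 ≤ c k) (hz : ∑ k, z k = 0)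
    (hmax : ∀ k, z k ≤ z i) :
    c i - ⨅ k, c k ≤ √(c i + ⨅ k, c k) * √(constrainedSqHingeRegret c z) := by
  have : Nonempty ι := ⟨i⟩
  obtain ⟨j, hj⟩ := exists_eq_ciInf_of_finite (f := c)
  rw [← hj]
  exact sub_le_sqrt_add_mul_sqrt_constrainedSqHingeRegret hc hz hmax j

end Regret

section CondCost

variable {l : ℕ} {p : (Fin l → Bool) → ℝ} {L : (Fin l → Bool) → (Fin l → Bool) → ℝ}

lemma condCost_nonneg {y' : Fin l → Bool} (hp0 : ∀ y, 0 ≤ p y) (hL : ∀ y, 0 ≤ L y' y) :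
    0 ≤ condCost p L y' :=
  Finset.sum_nonneg fun y _ ↦ mul_nonneg (hp0 y) (hL y)

lemma condCost_le_one {y' : Fin l → Bool} (hp0 : ∀ y, 0 ≤ p y) (hp1 : ∑ y, p y = 1)
    (hL : ∀ y, L y' y ≤ 1) : condCost p L y' ≤ 1 :=
  (Finset.sum_le_sum fun y _ ↦ mul_le_of_le_one_right (hp0 y) (hL y)).trans_eq hp1

end CondCost

theorem cstnd_bound_squared_hinge (l : ℕ) (hl : 1 ≤ l)
    (p : (Fin l → Bool) → ℝ) (hp0 : ∀ y, 0 ≤ p y) (hp1 : ∑ y, p y = 1)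
    (L : (Fin l → Bool) → (Fin l → Bool) → ℝ)
    (hL : ∀ y' y, L y' y ∈ Set.Icc (0 : ℝ) 1)
    (z : (Fin l → Bool) → ℝ) (hz : z ∈ centeredVecs l)
    (hhat : Fin l → Bool) (hmax : ∀ y', z y' ≤ z hhat) :
    condCost p L hhat - ⨅ y' : Fin l → Bool, condCost p L y'
      ≤ 2 * Real.sqrt (GcstndSqHinge (condCost p L) z
          - sInf ((fun z' => GcstndSqHinge (condCost p L) z') '' centeredVecs l)) := by
  have hc0 : ∀ y, 0 ≤ condCost p L y := fun y ↦ condCost_nonneg hp0 fun x ↦ (hL y x).1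
  have hc1 : condCost p L hhat ≤ 1 := condCost_le_one hp0 hp1 fun x ↦ (hL hhat x).2
  have hinf : ⨅ y, condCost p L y ≤ condCost p L hhat := ciInf_le (Set.finite_range _).bddBelow _
  have hfactor : √(condCost p L hhat + ⨅ y, condCost p L y) ≤ 2 :=
    Real.sqrt_le_iff.2 ⟨zero_le_two, by linarith⟩
  exact (cstnd_bound_squared_hinge_general hc0 hz hmax).trans
    (mul_le_mul_of_nonneg_right hfactor (Real.sqrt_nonneg _))
end
end

section
/- Let α, β, s, t be real numbers with α > 0, β > 0, s > 0, t > 0. Then the supremum over μ ∈ (−s, t) of the function μ ↦ α·(log(t − μ) − log s) + β·(log(s + μ) − log t) equals β·log( (s+t)·β / (t·(α+β)) ) + α·log( (s+t)·α / (s·(α+β)) ), and it is attained at μ* = (β·t − α·s)/(α + β). -/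
noncomputable section
open Real

/-!
For a weight `w > 0`, the concave function `x ↦ w * log x` lies below its tangent line at `c * w`,
whose slope `1 / c` does not depend on `w`. Adding these bounds, with `c` chosen so that the
tangency points have the prescribed total, shows that a weighted sum of logarithms of numbers with
fixed total is largest when these numbers are proportional to the weights. A transfer of `μ` keeps
`(t - μ) + (s + μ) = s + t` fixed, and `μ = (β * t - α * s) / (α + β)` makes the two terms
proportional to `α` and `β`.
-/

theorem mul_log_le_tangent {w x c : ℝ} (hw : 0 ≤ w) (hx : 0 < x) (hc : 0 < c) :
    w * log x ≤ w * log (c * w) + (x / c - w) := by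
  rcases hw.eq_or_lt with rfl | hw
  · simpa using (div_pos hx hc).le
  have hcw : 0 < c * w := mul_pos hc hw
  calc w * log x = w * log (c * w) + w * log (x / (c * w)) := by
        rw [log_div hx.ne' hcw.ne']; ring
    _ ≤ w * log (c * w) + w * (x / (c * w) - 1) := by
        gcongr
        exact log_le_sub_one_of_pos (div_pos hx hcw)
    _ = w * log (c * w) + (x / c - w) := by field_simp

theorem sum_mul_log_le_sum_mul_log_proportional {ι : Type*} {I : Finset ι} {w x : ι → ℝ}
    (hw : ∀ i ∈ I, 0 ≤ w i) (hw_sum : 0 < ∑ i ∈ I, w i) (hx : ∀ i ∈ I, 0 < x i) :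
    ∑ i ∈ I, w i * log (x i)
      ≤ ∑ i ∈ I, w i * log ((∑ j ∈ I, x j) * w i / ∑ j ∈ I, w j) := by
  have hx_sum : 0 < ∑ i ∈ I, x i :=
    Finset.sum_pos hx (Finset.nonempty_of_sum_ne_zero hw_sum.ne')
  set c := (∑ i ∈ I, x i) / ∑ i ∈ I, w i with hc_def
  have hc : 0 < c := div_pos hx_sum hw_sum
  have tangent_errors_cancel : ∑ i ∈ I, (x i / c - w i) = 0 := by
    rw [Finset.sum_sub_distrib, ← Finset.sum_div, hc_def, div_div_cancel₀ hx_sum.ne', sub_self]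
  calc ∑ i ∈ I, w i * log (x i)
      ≤ ∑ i ∈ I, (w i * log (c * w i) + (x i / c - w i)) :=
        Finset.sum_le_sum fun i hi => mul_log_le_tangent (hw i hi) (hx i hi) hc
    _ = ∑ i ∈ I, w i * log ((∑ j ∈ I, x j) * w i / ∑ j ∈ I, w j) := by
        rw [Finset.sum_add_distrib, tangent_errors_cancel, add_zero]
        simp only [hc_def, div_mul_eq_mul_div]

theorem mul_log_add_mul_log_le_proportional {a b x y : ℝ} (ha : 0 ≤ a) (hb : 0 ≤ b)
    (hab : 0 < a + b) (hx : 0 < x) (hy : 0 < y) :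
    a * log x + b * log y
      ≤ a * log ((x + y) * a / (a + b)) + b * log ((x + y) * b / (a + b)) := by
  simpa [Fin.sum_univ_two] using
    sum_mul_log_le_sum_mul_log_proportional (I := Finset.univ) (w := ![a, b]) (x := ![x, y])
      (by simp [Fin.forall_fin_two, ha, hb]) (by simpa using hab)
      (by simp [Fin.forall_fin_two, hx, hy])

theorem log_div_mul_eq_log_div_sub_log {x y z : ℝ} (hx : x ≠ 0) (hy : y ≠ 0) (hz : z ≠ 0) :
    log (x / (y * z)) = log (x / z) - log y := by
  rw [← log_div (div_ne_zero hx hz) hy, div_div, mul_comm z]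

theorem log_transfer_optimization (α β s t : ℝ)
    (hα : 0 < α) (hβ : 0 < β) (hs : 0 < s) (ht : 0 < t) :
    (β * t - α * s) / (α + β) ∈ Set.Ioo (-s) t
    ∧ (α * (Real.log (t - (β * t - α * s) / (α + β)) - Real.log s)
        + β * (Real.log (s + (β * t - α * s) / (α + β)) - Real.log t))
      = β * Real.log ((s + t) * β / (t * (α + β)))
        + α * Real.log ((s + t) * α / (s * (α + β)))
    ∧ ∀ μ ∈ Set.Ioo (-s) t,
        α * (Real.log (t - μ) - Real.log s) + β * (Real.log (s + μ) - Real.log t)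
          ≤ β * Real.log ((s + t) * β / (t * (α + β)))
            + α * Real.log ((s + t) * α / (s * (α + β))) := by
  have hαβ : 0 < α + β := add_pos hα hβ
  have hst : 0 < s + t := add_pos hs ht
  have sub_transfer_eq : t - (β * t - α * s) / (α + β) = (s + t) * α / (α + β) := by
    field_simp
    ring
  have add_transfer_eq : s + (β * t - α * s) / (α + β) = (s + t) * β / (α + β) := by
    field_simp
    ring
  have sub_transfer_pos : 0 < (s + t) * α / (α + β) := by positivity
  have add_transfer_pos : 0 < (s + t) * β / (α + β) := by positivity
  rw [log_div_mul_eq_log_div_sub_log (mul_pos hst hβ).ne' ht.ne' hαβ.ne',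
    log_div_mul_eq_log_div_sub_log (mul_pos hst hα).ne' hs.ne' hαβ.ne']
  refine ⟨⟨by linarith, by linarith⟩, by rw [sub_transfer_eq, add_transfer_eq, add_comm], ?_⟩
  rintro μ ⟨neg_s_lt, lt_t⟩
  have log_le := mul_log_add_mul_log_le_proportional hα.le hβ.le hαβ
    (sub_pos.2 lt_t) (neg_lt_iff_pos_add'.1 neg_s_lt)
  rw [show t - μ + (s + μ) = s + t by ring] at log_le
  linarith
end
end

section
/- Let a, b be real numbers with a > 0 and b > 0, and let z, w ∈ ℝ. Then the supremum over μ ∈ ℝ of the function μ ↦ b·(e^{w} − e^{z+μ}) + a·(e^{z} − e^{w−μ}) equals ( √(a·e^{z}) − √(b·e^{w}) )², and it is attained at μ* = (1/2)·log( (a/b)·e^{w−z} ). -/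
noncomputable section
open Real

/-!
A transfer `μ` turns the terms `a * exp z`, `b * exp w` into `b * exp (z + μ)`, `a * exp (w - μ)`
without changing their product. As `x + y = (√x - √y) ^ 2 + 2 * √(x * y)`, the decrease of the sum
is therefore the decrease of `(√x - √y) ^ 2`, which is largest when the two new terms are equal.
-/

theorem sq_sqrt_sub_sqrt {x y : ℝ} (hx : 0 ≤ x) (hy : 0 ≤ y) :
    (√x - √y) ^ 2 = x + y - 2 * √(x * y) := by
  rw [sub_sq, sq_sqrt hx, sq_sqrt hy, sqrt_mul hx]
  ring

theorem mul_exp_add_mul_mul_exp_sub (a b z w μ : ℝ) :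
    b * exp (z + μ) * (a * exp (w - μ)) = a * exp z * (b * exp w) := by
  have hexp : exp (z + μ) * exp (w - μ) = exp z * exp w := by
    rw [← exp_add, ← exp_add, add_add_sub_cancel]
  linear_combination a * b * hexp

theorem exp_transfer_eq_sq_sub_sq {a b : ℝ} (ha : 0 ≤ a) (hb : 0 ≤ b) (z w μ : ℝ) :
    b * (exp w - exp (z + μ)) + a * (exp z - exp (w - μ))
      = (√(a * exp z) - √(b * exp w)) ^ 2 - (√(b * exp (z + μ)) - √(a * exp (w - μ))) ^ 2 := by
  rw [sq_sqrt_sub_sqrt (x := a * exp z) (by positivity) (by positivity),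
    sq_sqrt_sub_sqrt (x := b * exp (z + μ)) (by positivity) (by positivity),
    mul_exp_add_mul_mul_exp_sub]
  ring

theorem mul_exp_add_eq_mul_exp_sub_iff {a b : ℝ} (ha : 0 < a) (hb : 0 < b) (z w μ : ℝ) :
    b * exp (z + μ) = a * exp (w - μ) ↔ μ = 1 / 2 * log (a / b * exp (w - z)) := by
  have hlog : log (a / b * exp (w - z)) = log a - log b + (w - z) := by
    rw [log_mul (by positivity) (exp_ne_zero _), log_div ha.ne' hb.ne', log_exp]
  calc b * exp (z + μ) = a * exp (w - μ)
      ↔ log (b * exp (z + μ)) = log (a * exp (w - μ)) :=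
        (log_injOn_pos.eq_iff (mul_pos hb (exp_pos _)) (mul_pos ha (exp_pos _))).symm
    _ ↔ log b + (z + μ) = log a + (w - μ) := by
        rw [log_mul hb.ne' (exp_ne_zero _), log_mul ha.ne' (exp_ne_zero _), log_exp, log_exp]
    _ ↔ μ = 1 / 2 * log (a / b * exp (w - z)) := by
        rw [hlog]
        constructor <;> intro h <;> linarith

theorem exp_transfer_optimization (a b z w : ℝ) (ha : 0 < a) (hb : 0 < b) :
    (b * (Real.exp w - Real.exp (z + (1 / 2) * Real.log ((a / b) * Real.exp (w - z))))
        + a * (Real.exp z - Real.exp (w - (1 / 2) * Real.log ((a / b) * Real.exp (w - z)))))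
      = (Real.sqrt (a * Real.exp z) - Real.sqrt (b * Real.exp w)) ^ 2
    ∧ ∀ μ : ℝ,
        b * (Real.exp w - Real.exp (z + μ)) + a * (Real.exp z - Real.exp (w - μ))
          ≤ (Real.sqrt (a * Real.exp z) - Real.sqrt (b * Real.exp w)) ^ 2 := by
  constructor
  · have hbalanced := (mul_exp_add_eq_mul_exp_sub_iff ha hb z w _).mpr rfl
    rw [exp_transfer_eq_sq_sub_sq ha.le hb.le, hbalanced, sub_self, zero_pow two_ne_zero, sub_zero]
  · intro μ
    rw [exp_transfer_eq_sq_sub_sq ha.le hb.le z w μ]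
    exact sub_le_self _ (sq_nonneg _)
end
end

section
/- Let α, β, s, t be real numbers with α > 0, β > 0, s > 0, t > 0. Then the supremum over μ ∈ (−s, t) of the function μ ↦ α·(1/s − 1/(t − μ)) + β·(1/t − 1/(s + μ)) equals α/s + β/t − (√α + √β)²/(s + t), and it is attained at μ* = (√β·t − √α·s)/(√α + √β). -/
noncomputable section
open Real

/-!
A transfer of mass `μ` splits the total `s + t` into the positive parts `t - μ` and `s + μ`, so
maximizing the decrease means minimizing `α / (t - μ) + β / (s + μ)`. Sedrakyan's inequality bounds
this sum below by `(√α + √β) ^ 2 / (s + t)`, with equality when the two parts are in the ratio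
`√α : √β`.
-/

section Semifield

variable {K : Type*} [Semifield K]

theorem sq_div_add_sq_div_of_proportional (a b c : K) :
    a ^ 2 / (a * c / (a + b)) + b ^ 2 / (b * c / (a + b)) = (a + b) ^ 2 / c := by
  field_simp

theorem add_sq_div_add_le [LinearOrder K] [IsStrictOrderedRing K] [ExistsAddOfLE K] {x y : K}
    (hx : 0 < x) (hy : 0 < y) (a b : K) :
    (a + b) ^ 2 / (x + y) ≤ a ^ 2 / x + b ^ 2 / y := by
  simpa using Finset.univ.sq_sum_div_le_sum_sq_div ![a, b] (g := ![x, y]) (by simp [hx, hy])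

end Semifield

section Field

variable {K : Type*} [Field K]

/-- The transfer `μ*` after which the parts `t - μ*` and `s + μ*` of the total `s + t` are in the
ratio `a : b`. The weights `a` and `b` stand for `√α` and `√β`. -/
def optimalTransfer (a b s t : K) : K :=
  (b * t - a * s) / (a + b)

theorem sub_optimalTransfer {a b : K} (hab : a + b ≠ 0) (s t : K) :
    t - optimalTransfer a b s t = a * (s + t) / (a + b) := by
  unfold optimalTransfer
  field_simp
  ring

theorem add_optimalTransfer {a b : K} (hab : a + b ≠ 0) (s t : K) :
    s + optimalTransfer a b s t = b * (s + t) / (a + b) := by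
  unfold optimalTransfer
  field_simp
  ring

variable [LinearOrder K] [IsStrictOrderedRing K]

theorem optimalTransfer_mem_Ioo {a b s t : K} (ha : 0 < a) (hb : 0 < b) (hst : 0 < s + t) :
    optimalTransfer a b s t ∈ Set.Ioo (-s) t := by
  have hab : a + b ≠ 0 := (add_pos ha hb).ne'
  constructor
  · rw [neg_lt_iff_pos_add', add_optimalTransfer hab]
    positivity
  · rw [← sub_pos, sub_optimalTransfer hab]
    positivity

/-- The parameters `p` and `q` stand for the inverse scores `1 / s` and `1 / t` before the transfer,
which only shift the objective by a constant. -/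
theorem inverse_transfer_optimization_general {a b s t : K} (ha : 0 < a) (hb : 0 < b)
    (hst : 0 < s + t) (p q : K) :
    optimalTransfer a b s t ∈ Set.Ioo (-s) t
    ∧ a ^ 2 * (p - 1 / (t - optimalTransfer a b s t))
        + b ^ 2 * (q - 1 / (s + optimalTransfer a b s t))
      = a ^ 2 * p + b ^ 2 * q - (a + b) ^ 2 / (s + t)
    ∧ ∀ μ ∈ Set.Ioo (-s) t,
        a ^ 2 * (p - 1 / (t - μ)) + b ^ 2 * (q - 1 / (s + μ))
          ≤ a ^ 2 * p + b ^ 2 * q - (a + b) ^ 2 / (s + t) := by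
  have objective_eq (μ : K) : a ^ 2 * (p - 1 / (t - μ)) + b ^ 2 * (q - 1 / (s + μ))
      = a ^ 2 * p + b ^ 2 * q - (a ^ 2 / (t - μ) + b ^ 2 / (s + μ)) := by ring
  simp only [objective_eq]
  refine ⟨optimalTransfer_mem_Ioo ha hb hst, ?_, fun μ hμ ↦ sub_le_sub_left ?_ _⟩
  · have hab : a + b ≠ 0 := (add_pos ha hb).ne'
    rw [sub_optimalTransfer hab, add_optimalTransfer hab, sq_div_add_sq_div_of_proportional]
  · have parts_add : s + t = (t - μ) + (s + μ) := by ring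
    rw [parts_add]
    exact add_sq_div_add_le (sub_pos.2 hμ.2) (neg_lt_iff_pos_add'.1 hμ.1) a b

end Field

theorem inverse_transfer_optimization (α β s t : ℝ)
    (hα : 0 < α) (hβ : 0 < β) (hs : 0 < s) (ht : 0 < t) :
    (Real.sqrt β * t - Real.sqrt α * s) / (Real.sqrt α + Real.sqrt β) ∈ Set.Ioo (-s) t
    ∧ (α * (1 / s - 1 / (t - (Real.sqrt β * t - Real.sqrt α * s) / (Real.sqrt α + Real.sqrt β)))
        + β * (1 / t - 1 / (s + (Real.sqrt β * t - Real.sqrt α * s) / (Real.sqrt α + Real.sqrt β))))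
      = α / s + β / t - (Real.sqrt α + Real.sqrt β) ^ 2 / (s + t)
    ∧ ∀ μ ∈ Set.Ioo (-s) t,
        α * (1 / s - 1 / (t - μ)) + β * (1 / t - 1 / (s + μ))
          ≤ α / s + β / t - (Real.sqrt α + Real.sqrt β) ^ 2 / (s + t) := by
  simpa only [optimalTransfer, sq_sqrt hα.le, sq_sqrt hβ.le, mul_one_div] using
    inverse_transfer_optimization_general (sqrt_pos.2 hα) (sqrt_pos.2 hβ) (add_pos hs ht)
      (1 / s) (1 / t)
end
end
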